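/- Let n be a natural number and let M be a nonempty, connected, compact, Hausdorff topological space locally homeomorphic to the euclidean space ℝⁿ (a topological n-manifold). If a countable group G acts effectively (faithfully) by homeomorphisms on M and the orbit space M/G is Hausdorff, then G is finite. -/

import Mathlib

section part1

open Equiv in
def vtx {n : ℕ} (v : Fin n → ℤ) (σ : Perm (Fin n)) (k : ℕ) : Fin n → ℤ :=
  fun i => v i + if (σ i : ℕ) < k then 1 else 0

def lw {n : ℕ} (l : Fin (n+1) → Fin (n+1)) : ℤ :=
  Matrix.det (Matrix.of fun i j => if l j = i then (1:ℤ) else 0)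

lemma lw_closed {n : ℕ} (l : Fin (n+2) → Fin (n+1)) :
    ∑ i : Fin (n+2), (-1:ℤ)^(i:ℕ) * lw (fun k => l (i.succAbove k)) = 0 := by
  let M : Matrix (Fin (n+2)) (Fin (n+2)) ℤ :=
    Matrix.of fun i j => Fin.cases (motive := fun _ => ℤ) 1 (fun i => if l j = i then (1:ℤ) else 0) i
  have h1 : M.det = ∑ i : Fin (n+2), (-1:ℤ)^(i:ℕ) * lw (fun k => l (i.succAbove k)) := by
    rw [Matrix.det_succ_row_zero]
    refine Finset.sum_congr rfl fun i _ => ?_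
    have : M 0 i = 1 := rfl
    rw [this, mul_one]
    rfl
  rw [← h1]
  -- row vector (1,-1,...,-1) kills M
  rw [← Matrix.exists_vecMul_eq_zero_iff]
  refine ⟨Fin.cases (motive := fun _ => ℤ) 1 (fun _ => -1), ?_, ?_⟩
  · intro h
    have := congrFun h 0
    simp at this
  · ext j
    simp [Matrix.vecMul, dotProduct, Fin.sum_univ_succ, M]

lemma lw_surj {n : ℕ} (l : Fin (n+1) → Fin (n+1)) (i : Fin (n+1)) (h : ∀ k, l k ≠ i) :
    lw l = 0 := by
  apply Matrix.det_eq_zero_of_row_eq_zero i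
  intro j
  simp [h j]

lemma lw_perm {n : ℕ} (l : Equiv.Perm (Fin (n+1))) : lw l = Equiv.Perm.sign l := by
  have := Matrix.det_permutation (R := ℤ) l
  rw [← Matrix.det_transpose] at this
  refine Eq.trans ?_ this
  rw [lw]
  congr 1
  ext i j
  simp [PEquiv.toMatrix_apply, Equiv.toPEquiv_apply, eq_comm]

open Equiv

lemma vtx_swap {n : ℕ} (v : Fin (n+1) → ℤ) (σ : Perm (Fin (n+1))) (k : ℕ) (hk : k + 1 < n + 1) (m : ℕ)
    (hm : m ≠ k + 1) :
    vtx v ((swap (⟨k, by omega⟩ : Fin (n+1)) ⟨k+1, hk⟩) * σ) m = vtx v σ m := by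
  funext i
  have key : ((((swap (⟨k, by omega⟩ : Fin (n+1)) ⟨k+1, hk⟩) * σ) i : Fin (n+1)) : ℕ) < m ↔ (σ i : ℕ) < m := by
    rw [Perm.mul_apply]
    rcases eq_or_ne (σ i) ⟨k, by omega⟩ with h | h
    · rw [h, swap_apply_left]; simp only; omega
    rcases eq_or_ne (σ i) ⟨k+1, by omega⟩ with h' | h'
    · rw [h', swap_apply_right]; simp only; omega
    rw [swap_apply_of_ne_of_ne h h']
  simp only [vtx, key]

lemma mid_zero {n : ℕ} (A : (Fin (n+1) → (Fin (n+1) → ℤ)) → ℤ) (v : Fin (n+1) → ℤ)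
    (i : Fin n) :
    ∑ σ : Perm (Fin (n+1)), (Perm.sign σ : ℤ) *
      A (fun k => vtx v σ ((i.castSucc.succ).succAbove k : Fin (n+2))) = 0 := by
  set s : Perm (Fin (n+1)) := swap (⟨i, by omega⟩ : Fin (n+1)) ⟨i+1, by omega⟩ with hs
  have hsgn : Perm.sign s = -1 := by
    apply Perm.sign_swap
    simp
  have h := Equiv.sum_comp (Equiv.mulLeft s) (fun σ : Perm (Fin (n+1)) => (Perm.sign σ : ℤ) *
      A (fun k => vtx v σ ((i.castSucc.succ).succAbove k : Fin (n+2))))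
  have h2 : ∀ σ : Perm (Fin (n+1)), (Perm.sign (Equiv.mulLeft s σ) : ℤ) *
      A (fun k => vtx v (Equiv.mulLeft s σ) ((i.castSucc.succ).succAbove k : Fin (n+2)))
      = - ((Perm.sign σ : ℤ) *
      A (fun k => vtx v σ ((i.castSucc.succ).succAbove k : Fin (n+2)))) := by
    intro σ
    have : (fun k => vtx v (Equiv.mulLeft s σ) ((i.castSucc.succ).succAbove k : Fin (n+2)))
       = (fun k => vtx v σ ((i.castSucc.succ).succAbove k : Fin (n+2))) := by
      funext k
      apply vtx_swap v σ i (by omega)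
      have := Fin.succAbove_ne (i.castSucc.succ) k
      intro h
      apply this
      ext
      simp [h]
    rw [this]
    simp [hsgn]
  simp_rw [h2] at h
  rw [Finset.sum_neg_distrib] at h
  linarith

/-- the last face of a simplex is the zeroth face of a shifted one -/
lemma face_last {n : ℕ} (v : Fin (n+1) → ℤ) (σ : Perm (Fin (n+1))) (k : Fin (n+1)) :
    vtx v σ k = vtx (v - Pi.single ((finRotate (n+1) * σ).symm 0) 1) (finRotate (n+1) * σ) (k+1) := by
  funext i
  set τ := finRotate (n+1) * σ with hτ
  have hτi : τ i = finRotate (n+1) (σ i) := rfl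
  simp only [vtx, Pi.sub_apply]
  by_cases h : σ i = Fin.last n
  · have h0 : τ i = 0 := by rw [hτi, h, finRotate_last]
    have : i = τ.symm 0 := by rw [← h0]; simp
    rw [← this, h0, h]
    have : ¬ (n < (k:ℕ)) := by omega
    simp [this]
  · have hv : (τ i : ℕ) = σ i + 1 := by
      rw [hτi]; exact coe_finRotate_of_ne_last h
    have : i ≠ τ.symm 0 := by
      rintro h'
      have h2 : τ i = 0 := by rw [h']; simp
      rw [h2] at hv; simp at hv
    rw [Pi.single_eq_of_ne this, hv]
    simp

lemma sum_last {n : ℕ} (A : (Fin (n+1) → (Fin (n+1) → ℤ)) → ℤ) (v : Fin (n+1) → ℤ) :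
    ∑ σ : Perm (Fin (n+1)), (Perm.sign σ : ℤ) *
      A (fun k => vtx v σ k) = ∑ σ : Perm (Fin (n+1)), (-1)^n * ((Perm.sign σ : ℤ) *
      A (fun k => vtx (v - Pi.single (σ.symm 0) 1) σ (k+1))) := by
  refine Eq.trans ?_ (Equiv.sum_comp (Equiv.mulLeft (finRotate (n+1))) _)
  refine Finset.sum_congr rfl fun σ _ => ?_
  have : (fun k : Fin (n+1) => vtx v σ k) = _ := funext fun k => face_last v σ k
  rw [this]
  simp only [Equiv.coe_mulLeft, Perm.sign_mul, sign_finRotate]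
  rw [← mul_assoc]
  congr 1
  push_cast
  rw [← mul_assoc, ← pow_add, Even.neg_one_pow ⟨n, rfl⟩, one_mul]

lemma cons_vtx {n : ℕ} (τ : ℤ) (u : Fin n → ℤ) (e : Perm (Fin n)) (k : ℕ) :
    vtx (Fin.cons τ u : Fin (n+1) → ℤ) (Perm.decomposeFin.symm (0, e)) (k+1)
      = Fin.cons (τ+1) (vtx u e k) := by
  funext i
  refine Fin.cases ?_ (fun i => ?_) i
  · simp [vtx]
  · simp [vtx]

theorem slab {n : ℕ} (τ : ℤ) (A : (Fin (n+1) → (Fin (n+1) → ℤ)) → ℤ)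
    (hA : ∀ (u : Fin n → ℤ) (σ : Perm (Fin (n+1))),
      ∑ i : Fin (n+2), (-1:ℤ)^(i:ℕ) * A (fun k => vtx (Fin.cons τ u : Fin (n+1) → ℤ) σ (i.succAbove k : Fin (n+2))) = 0)
    (hf : ∀ (σ : Perm (Fin (n+1))), (Function.support fun u : Fin n → ℤ =>
        A (fun k => vtx (Fin.cons τ u : Fin (n+1) → ℤ) σ (k+1))).Finite)
    (hf' : ∀ (σ : Perm (Fin (n+1))), (Function.support fun u : Fin n → ℤ =>
        A (fun k => vtx ((Fin.cons τ u : Fin (n+1) → ℤ) - Pi.single (σ.symm 0) 1) σ (k+1))).Finite) :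
    ∑ᶠ u : Fin n → ℤ, ∑ e : Perm (Fin n), (Perm.sign e : ℤ) *
        A (fun k => Fin.cons (τ+1) (vtx u e k))
    = ∑ᶠ u : Fin n → ℤ, ∑ e : Perm (Fin n), (Perm.sign e : ℤ) *
        A (fun k => Fin.cons τ (vtx u e k)) := by
  set G : Perm (Fin (n+1)) → (Fin (n+1) → ℤ) → ℤ := fun σ v => A (fun k => vtx v σ (k+1)) with hG
  have key : ∀ u : Fin n → ℤ, ∑ σ : Perm (Fin (n+1)), (Perm.sign σ : ℤ) *
      (G σ (Fin.cons τ u) - G σ ((Fin.cons τ u : Fin (n+1) → ℤ) - Pi.single (σ.symm 0) 1)) = 0 := by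
    intro u
    have h0 : ∑ σ : Perm (Fin (n+1)), (Perm.sign σ : ℤ) * ∑ i : Fin (n+2), (-1:ℤ)^(i:ℕ) *
       A (fun k => vtx (Fin.cons τ u : Fin (n+1) → ℤ) σ (i.succAbove k : Fin (n+2))) = 0 :=
      Finset.sum_eq_zero fun σ _ => by rw [hA, mul_zero]
    simp_rw [Finset.mul_sum] at h0
    rw [Finset.sum_comm, Fin.sum_univ_succ, Fin.sum_univ_castSucc] at h0
    have hmid : ∑ i : Fin n, ∑ σ : Perm (Fin (n+1)), (Perm.sign σ : ℤ) * ((-1:ℤ)^((i.castSucc.succ : Fin (n+2)):ℕ) *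
       A (fun k => vtx (Fin.cons τ u : Fin (n+1) → ℤ) σ ((i.castSucc.succ).succAbove k : Fin (n+2)))) = 0 := by
      refine Finset.sum_eq_zero fun i _ => ?_
      have := mid_zero A (Fin.cons τ u) i
      simp_rw [mul_left_comm, ← Finset.mul_sum]
      rw [this, mul_zero]
    rw [hmid, zero_add] at h0
    have hl := sum_last A (Fin.cons τ u)
    have e1 : ∑ σ : Perm (Fin (n+1)), (Perm.sign σ : ℤ) * ((-1:ℤ)^(((Fin.last n).succ : Fin (n+2)):ℕ) *
       A (fun k => vtx (Fin.cons τ u : Fin (n+1) → ℤ) σ (((Fin.last n).succ).succAbove k : Fin (n+2))))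
       = (-1)^(n+1) * ∑ σ : Perm (Fin (n+1)), (Perm.sign σ : ℤ) *
          A (fun k => vtx (Fin.cons τ u : Fin (n+1) → ℤ) σ k) := by
      rw [Finset.mul_sum]
      refine Finset.sum_congr rfl fun σ _ => ?_
      rw [mul_left_comm]
      simp [Fin.succ_last]
    rw [e1, hl, ← Finset.mul_sum, ← mul_assoc, ← pow_add] at h0
    have : (-1:ℤ)^(n+1+n) = -1 := Odd.neg_one_pow ⟨n, by ring⟩
    rw [this] at h0
    simp only [mul_sub, Finset.sum_sub_distrib]
    simp only [Fin.val_zero, pow_zero, one_mul, Fin.zero_succAbove, Fin.val_succ] at h0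
    simp only [hG]
    linarith
  have hsum : ∑ σ : Perm (Fin (n+1)), (Perm.sign σ : ℤ) * ∑ᶠ u : Fin n → ℤ,
      (G σ (Fin.cons τ u) - G σ ((Fin.cons τ u : Fin (n+1) → ℤ) - Pi.single (σ.symm 0) 1)) = 0 := by
    have : ∑ᶠ u : Fin n → ℤ, ∑ σ : Perm (Fin (n+1)), (Perm.sign σ : ℤ) *
      (G σ (Fin.cons τ u) - G σ ((Fin.cons τ u : Fin (n+1) → ℤ) - Pi.single (σ.symm 0) 1)) = 0 := by
      simp [key]
    rw [finsum_sum_comm] at this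
    · rw [← this]
      refine Finset.sum_congr rfl fun σ _ => ?_
      rw [mul_finsum]
    · intro σ _
      refine ((hf σ).union (hf' σ)).subset ?_
      intro u hu
      by_contra hcon
      simp only [Set.mem_union, Function.mem_support, not_or, not_not] at hcon
      apply hu
      simp only [hG]
      rw [hcon.1, hcon.2]; simp
  have hsub : ∀ σ, ∑ᶠ u : Fin n → ℤ,
      (G σ (Fin.cons τ u) - G σ ((Fin.cons τ u : Fin (n+1) → ℤ) - Pi.single (σ.symm 0) 1))
      = ∑ᶠ u : Fin n → ℤ, G σ (Fin.cons τ u)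
       - ∑ᶠ u : Fin n → ℤ, G σ ((Fin.cons τ u : Fin (n+1) → ℤ) - Pi.single (σ.symm 0) 1) :=
    fun σ => finsum_sub_distrib (hf σ) (hf' σ)
  have hvan : ∀ σ : Perm (Fin (n+1)), σ.symm 0 ≠ 0 → ∑ᶠ u : Fin n → ℤ,
      (G σ (Fin.cons τ u) - G σ ((Fin.cons τ u : Fin (n+1) → ℤ) - Pi.single (σ.symm 0) 1)) = 0 := by
    intro σ hσ
    obtain ⟨j, hj⟩ := Fin.exists_succ_eq.mpr hσ
    rw [hsub, sub_eq_zero, ← hj]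
    rw [← finsum_comp_equiv (Equiv.subRight (Pi.single j 1 : Fin n → ℤ))]
    apply finsum_congr
    intro u
    congr 1
    funext i
    refine Fin.cases ?_ (fun i => ?_) i
    · simp
    · simp [Pi.single_apply]
  have hdec := Equiv.sum_comp (Perm.decomposeFin (n := n)).symm (fun σ : Perm (Fin (n+1)) => (Perm.sign σ : ℤ) * ∑ᶠ u : Fin n → ℤ,
      (G σ (Fin.cons τ u) - G σ ((Fin.cons τ u : Fin (n+1) → ℤ) - Pi.single (σ.symm 0) 1)))
  rw [hsum, Fintype.sum_prod_type, Finset.sum_eq_single 0] at hdec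
  rotate_left
  · intro b _ hb
    refine Finset.sum_eq_zero fun e _ => ?_
    rw [hvan, mul_zero]
    intro h
    apply hb
    rw [Equiv.symm_apply_eq] at h
    rw [Perm.decomposeFin_symm_apply_zero] at h
    exact h.symm
  · simp
  simp_rw [hsub] at hdec
  have hs0 : ∀ e : Perm (Fin n), (Perm.decomposeFin.symm (0, e)).symm 0 = 0 := by
    intro e
    rw [Equiv.symm_apply_eq]; simp
  have g1 : ∀ (e : Perm (Fin n)) (u : Fin n → ℤ), G (Perm.decomposeFin.symm (0, e)) (Fin.cons τ u) = A (fun k => Fin.cons (τ+1) (vtx u e k)) := by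
    intro e u
    simp only [hG, cons_vtx]
  have g2 : ∀ (e : Perm (Fin n)) (u : Fin n → ℤ), G (Perm.decomposeFin.symm (0, e))
     ((Fin.cons τ u : Fin (n+1) → ℤ) - Pi.single ((Perm.decomposeFin.symm (0, e)).symm 0) 1) = A (fun k => Fin.cons τ (vtx u e k)) := by
    intro e u
    have : ((Fin.cons τ u : Fin (n+1) → ℤ) - Pi.single ((Perm.decomposeFin.symm (0, e)).symm 0) 1) = Fin.cons (τ-1) u := by
      rw [hs0]
      funext i
      refine Fin.cases ?_ (fun i => ?_) i
      · simp
      · simp [Pi.single_apply]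
    rw [this]
    simp only [hG, cons_vtx, sub_add_cancel]
  simp_rw [g1, g2] at hdec
  simp only [mul_sub, Finset.sum_sub_distrib, sub_eq_zero] at hdec
  have F1 : ∀ e : Perm (Fin n), (Function.support fun u : Fin n → ℤ => A (fun k => Fin.cons (τ+1) (vtx u e k))).Finite := by
    intro e
    have := hf (Perm.decomposeFin.symm (0, e))
    simp_rw [cons_vtx] at this
    exact this
  have F2 : ∀ e : Perm (Fin n), (Function.support fun u : Fin n → ℤ => A (fun k => Fin.cons τ (vtx u e k))).Finite := by
    intro e
    have := hf' (Perm.decomposeFin.symm (0, e))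
    simp_rw [← g2 e]
    exact this
  rw [finsum_sum_comm, finsum_sum_comm]
  · have m1 : ∀ e : Perm (Fin n), ∑ᶠ u : Fin n → ℤ, (Perm.sign e : ℤ) * A (fun k => Fin.cons (τ+1) (vtx u e k)) = (Perm.sign e : ℤ) * ∑ᶠ u : Fin n → ℤ, A (fun k => Fin.cons (τ+1) (vtx u e k)) :=
      fun e => (mul_finsum _ _).symm
    have m2 : ∀ e : Perm (Fin n), ∑ᶠ u : Fin n → ℤ, (Perm.sign e : ℤ) * A (fun k => Fin.cons τ (vtx u e k)) = (Perm.sign e : ℤ) * ∑ᶠ u : Fin n → ℤ, A (fun k => Fin.cons τ (vtx u e k)) :=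
      fun e => (mul_finsum _ _).symm
    simp_rw [m1, m2]
    simp only [Perm.decomposeFin.symm_sign, if_true, one_mul] at hdec
    linarith
  · intro e _
    exact (F2 e).subset (Function.support_mul_subset_right _ _)
  · intro e _
    exact (F1 e).subset (Function.support_mul_subset_right _ _)

end part1

section part2
open Equiv Set Filter Topology

noncomputable def cnt {n : ℕ} (lab : (Fin n → ℤ) → Fin (n+1)) (e : (Fin n → ℤ) → ℤ) : ℤ :=
  ∑ᶠ u : Fin n → ℤ, ∑ σ : Perm (Fin n), (Perm.sign σ : ℤ) *
    (e u * lw (fun k : Fin (n+1) => lab (vtx u σ k)))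

lemma vtx_zero {n : ℕ} (v : Fin n → ℤ) (σ : Perm (Fin n)) : vtx v σ 0 = v := by
  funext i; simp [vtx]

lemma vtx_cell {n : ℕ} (v : Fin n → ℤ) (σ : Perm (Fin n)) (k : ℕ) (i : Fin n) :
    vtx v σ k i = v i ∨ vtx v σ k i = v i + 1 := by
  unfold vtx; split_ifs <;> simp

theorem cnt_step {n : ℕ} (τ : ℤ) (lab : (Fin (n+1) → ℤ) → Fin (n+1)) (e : (Fin (n+1) → ℤ) → ℤ)
    (h0 : {u : Fin n → ℤ | e (Fin.cons τ u) ≠ 0}.Finite)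
    (h1 : {u : Fin n → ℤ | e (Fin.cons (τ+1) u) ≠ 0}.Finite)
    (hc : ∀ u : Fin n → ℤ,
      (∀ w : Fin (n+1) → ℤ, (∀ i, w i = (Fin.cons τ u : Fin (n+1) → ℤ) i ∨ w i = (Fin.cons τ u : Fin (n+1) → ℤ) i + 1) → e w = e (Fin.cons τ u)) ∨
      ∃ l, ∀ w : Fin (n+1) → ℤ, (∀ i, w i = (Fin.cons τ u : Fin (n+1) → ℤ) i ∨ w i = (Fin.cons τ u : Fin (n+1) → ℤ) i + 1) → lab w ≠ l) :
    cnt (fun u => lab (Fin.cons (τ+1) u)) (fun u => e (Fin.cons (τ+1) u))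
      = cnt (fun u => lab (Fin.cons τ u)) (fun u => e (Fin.cons τ u)) := by
  have := slab τ (fun w => e (w 0) * lw (fun k => lab (w k))) ?_ ?_ ?_
  · simpa [cnt, vtx_zero] using this
  · intro u σ
    rcases hc u with h | ⟨l, h⟩
    · have hh : ∀ k : ℕ, e (vtx (Fin.cons τ u) σ k) = e (Fin.cons τ u) :=
        fun k => h _ (fun i => vtx_cell _ _ _ _)
      simp only [hh]
      have := lw_closed (fun k : Fin (n+2) => lab (vtx (Fin.cons τ u) σ k))
      simp_rw [mul_left_comm _ (e (Fin.cons τ u)), ← Finset.mul_sum]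
      rw [this, mul_zero]
    · refine Finset.sum_eq_zero fun i _ => ?_
      rw [lw_surj _ l, mul_zero, mul_zero]
      intro k
      exact h _ (fun i => vtx_cell _ _ _ _)
  · intro σ
    set d : Fin n → ℤ := fun i => if (σ i.succ : ℕ) < 1 then 1 else 0 with hd
    have hinj : Function.Injective (fun u : Fin n → ℤ => u + d) := add_left_injective d
    refine ((h0.preimage hinj.injOn).union (h1.preimage hinj.injOn)).subset ?_
    intro u hu
    have hu' : e (vtx (Fin.cons τ u) σ (0+1)) ≠ 0 := by
      intro h; apply hu; simp only [Fin.val_zero, h, zero_mul]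
    by_cases hs : (σ 0 : ℕ) < 1
    · right
      have : vtx (Fin.cons τ u) σ (0+1) = Fin.cons (τ+1) (u + d) := by
        funext i
        refine Fin.cases ?_ (fun i => ?_) i
        · simp only [vtx, Fin.cons_zero, zero_add, if_pos hs]
        · simp [vtx, hd]
      rw [this] at hu'
      exact hu'
    · left
      have : vtx (Fin.cons τ u) σ (0+1) = Fin.cons τ (u + d) := by
        funext i
        refine Fin.cases ?_ (fun i => ?_) i
        · simp only [vtx, Fin.cons_zero, zero_add, if_neg hs, add_zero]
        · simp [vtx, hd]
      rw [this] at hu'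
      exact hu'
  · intro σ
    refine h0.subset ?_
    intro u hu
    have hu' : e (vtx ((Fin.cons τ u : Fin (n+1) → ℤ) - Pi.single (σ.symm 0) 1) σ (0+1)) ≠ 0 := by
      intro h; apply hu; simp only [Fin.val_zero, h, zero_mul]
    have : vtx ((Fin.cons τ u : Fin (n+1) → ℤ) - Pi.single (σ.symm 0) 1) σ (0+1) = Fin.cons τ u := by
      funext i
      simp only [vtx, Pi.sub_apply]
      by_cases hi : i = σ.symm 0
      · have : σ i = 0 := by rw [hi]; simp
        rw [← hi, this]; simp
      · have : σ i ≠ 0 := by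
          intro h; apply hi; rw [← h]; simp
        have h2 : ¬ ((σ i : ℕ) < 0 + 1) := by
          intro h; apply this; exact Fin.ext (by rw [Fin.val_zero]; omega)
        rw [Pi.single_eq_of_ne hi, if_neg h2]; simp
    rw [this] at hu'
    exact hu'

def pt {n : ℕ} (q : Fin n → ℝ) (ε : ℝ) (u : Fin n → ℤ) : Fin n → ℝ := fun i => q i + ε * u i

noncomputable def cntε {n : ℕ} (q : Fin n → ℝ) (ε : ℝ) (lab : (Fin n → ℝ) → Fin (n+1)) (e : (Fin n → ℝ) → ℤ) : ℤ :=
  cnt (fun u => lab (pt q ε u)) (fun u => e (pt q ε u))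

lemma fin_supp {n : ℕ} (q : Fin n → ℝ) (ε : ℝ) (hε : 0 < ε) (e : (Fin n → ℝ) → ℤ) (R : ℝ)
    (hR : ∀ x, e x ≠ 0 → ‖x‖ ≤ R) : {u : Fin n → ℤ | e (pt q ε u) ≠ 0}.Finite := by
  obtain ⟨N, hN⟩ := exists_nat_gt ((R + ‖q‖) / ε)
  refine (Set.finite_Icc (fun _ : Fin n => -(N:ℤ)) (fun _ => (N:ℤ))).subset ?_
  intro u hu
  have h1 := hR _ hu
  have key : ∀ i, |(u i : ℝ)| ≤ N := by
    intro i
    have h2 := (norm_le_pi_norm (pt q ε u) i).trans h1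
    have h3 := norm_le_pi_norm q i
    rw [Real.norm_eq_abs] at h2 h3
    rw [div_lt_iff₀ hε] at hN
    have h4 : |ε * u i| ≤ R + ‖q‖ := by
      have : ε * u i = pt q ε u i - q i := by simp [pt]
      rw [this]
      exact (abs_sub _ _).trans (add_le_add h2 h3)
    rw [abs_mul, abs_of_pos hε] at h4
    have : ε * |(u i:ℝ)| < ε * N := by linarith
    exact (lt_of_mul_lt_mul_left this hε.le).le
  rw [Set.mem_Icc]
  constructor <;> intro i
  · have := (abs_le.mp (key i)).1
    exact_mod_cast this
  · have := (abs_le.mp (key i)).2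
    exact_mod_cast this

theorem homotopy {n : ℕ} (q : Fin n → ℝ) (lab : ℝ → (Fin n → ℝ) → Fin (n+1)) (e : ℝ → (Fin n → ℝ) → ℤ) (R : ℝ)
    (hR : ∀ t ∈ Icc (0:ℝ) 1, ∀ x, e t x ≠ 0 → ‖x‖ ≤ R)
    (hv : ∀ t ∈ Icc (0:ℝ) 1, ∀ x,
      (∀ᶠ p : ℝ × (Fin n → ℝ) in 𝓝 (t, x), p.1 ∈ Icc (0:ℝ) 1 → e p.1 p.2 = e t x) ∨
      ∃ l, ∀ᶠ p : ℝ × (Fin n → ℝ) in 𝓝 (t, x), p.1 ∈ Icc (0:ℝ) 1 → lab p.1 p.2 ≠ l) :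
    ∀ᶠ ε in 𝓝[>] (0:ℝ), cntε q ε (lab 1) (e 1) = cntε q ε (lab 0) (e 0) := by
  classical
  let c : ℝ × (Fin n → ℝ) → Set (ℝ × (Fin n → ℝ)) := fun p =>
    if (∀ᶠ p' : ℝ × (Fin n → ℝ) in 𝓝 p, p'.1 ∈ Icc (0:ℝ) 1 → e p'.1 p'.2 = e p.1 p.2) then
      {p' | p'.1 ∈ Icc (0:ℝ) 1 → e p'.1 p'.2 = e p.1 p.2}
    else if h : (∃ l, ∀ᶠ p' : ℝ × (Fin n → ℝ) in 𝓝 p, p'.1 ∈ Icc (0:ℝ) 1 → lab p'.1 p'.2 ≠ l) then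
      {p' | p'.1 ∈ Icc (0:ℝ) 1 → lab p'.1 p'.2 ≠ h.choose}
    else univ
  have hcn : ∀ p, c p ∈ 𝓝 p := by
    intro p
    simp only [c]
    split_ifs with h1 h2
    · exact h1
    · exact h2.choose_spec
    · exact univ_mem
  have hcomp : IsCompact (Icc (0:ℝ) 1 ×ˢ Metric.closedBall (0 : Fin n → ℝ) (R+1)) :=
    isCompact_Icc.prod (isCompact_closedBall _ _)
  -- neighbourhoods on compact set
  obtain ⟨δ, hδ, hL⟩ := lebesgue_number_lemma_of_metric
    (c := fun p : (Icc (0:ℝ) 1 ×ˢ Metric.closedBall (0 : Fin n → ℝ) (R+1) : Set _) => interior (c p)) hcomp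
    (fun _ => isOpen_interior)
    (fun p hp => Set.mem_iUnion.mpr ⟨⟨p, hp⟩, mem_interior_iff_mem_nhds.mpr (hcn p)⟩)
  obtain ⟨N, hN⟩ := exists_nat_gt (1/δ)
  have hNpos : (0:ℝ) < N := lt_trans (by positivity) hN
  have hNδ : 1 / (N:ℝ) < δ := by
    rw [div_lt_iff₀ hδ] at hN; rw [div_lt_iff₀ hNpos]; linarith
  have hev : ∀ᶠ ε in 𝓝[>] (0:ℝ), 0 < ε ∧ ε < min δ 1 := by
    have : Ioo (0:ℝ) (min δ 1) ∈ 𝓝[>] (0:ℝ) := Ioo_mem_nhdsGT (by positivity)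
    exact this
  filter_upwards [hev] with ε ⟨hε, hε2⟩
  have hεδ := lt_of_lt_of_le hε2 (min_le_left _ _)
  have hε1 := lt_of_lt_of_le hε2 (min_le_right _ _)
  have step : ∀ τ : ℕ, τ ≤ N → cntε q ε (lab ((τ:ℝ)/N)) (e ((τ:ℝ)/N)) = cntε q ε (lab 0) (e 0) := by
    intro τ
    induction τ with
    | zero => intro _; simp
    | succ τ ih =>
      intro hτ
      rw [← ih (by omega)]
      have ht : ∀ s : ℕ, s ≤ N → (s:ℝ)/N ∈ Icc (0:ℝ) 1 := fun s hs =>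
        ⟨by positivity, by rw [div_le_one hNpos]; exact_mod_cast hs⟩
      have hst := cnt_step (n := n) (τ:ℤ) (fun w => lab ((w 0 : ℝ)/N) (pt q ε (Fin.tail w))) (fun w => e ((w 0 : ℝ)/N) (pt q ε (Fin.tail w))) ?_ ?_ ?_
      · simpa [cntε] using hst
      · simp only [Fin.cons_zero, Fin.tail_cons]
        exact fin_supp q ε hε _ R (hR _ (by simpa using ht τ (by omega)))
      · simp only [Fin.cons_zero, Fin.tail_cons]
        exact fin_supp q ε hε _ R (hR _ (by simpa using ht (τ+1) (by omega)))
      · intro u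
        have cellt : ∀ w : Fin (n+1) → ℤ, (∀ i, w i = (Fin.cons (τ:ℤ) u : Fin (n+1) → ℤ) i ∨ w i = (Fin.cons (τ:ℤ) u : Fin (n+1) → ℤ) i + 1) →
            ((w 0 : ℝ)/N ∈ Icc (0:ℝ) 1) ∧ |(w 0 : ℝ)/N - (τ:ℝ)/N| < δ ∧ ‖pt q ε (Fin.tail w) - pt q ε u‖ ≤ ε := by
          intro w hw
          refine ⟨?_, ?_, ?_⟩
          · rcases hw 0 with h | h
            · rw [h]; simpa using ht τ (by omega)
            · rw [h]; simpa using ht (τ+1) (by omega)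
          · rcases hw 0 with h | h
            · rw [h]; simpa using hδ
            · rw [h]; simp only [Fin.cons_zero]
              push_cast
              rw [← sub_div, add_sub_cancel_left, abs_of_pos (by positivity)]; exact hNδ
          · rw [pi_norm_le_iff_of_nonneg hε.le]
            intro i
            rcases hw i.succ with h | h
            · simp [pt, Fin.tail, h, hε.le]
            · simp [pt, Fin.tail, h, mul_add, abs_of_pos hε]
        by_cases hb : ‖pt q ε u‖ ≤ R + 1
        · have hmem : ((τ:ℝ)/N, pt q ε u) ∈ Icc (0:ℝ) 1 ×ˢ Metric.closedBall (0 : Fin n → ℝ) (R+1) :=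
            ⟨ht τ (by omega), by simpa using hb⟩
          obtain ⟨⟨y, hy⟩, hyb⟩ := hL _ hmem
          have hin : ∀ w : Fin (n+1) → ℤ, (∀ i, w i = (Fin.cons (τ:ℤ) u : Fin (n+1) → ℤ) i ∨ w i = (Fin.cons (τ:ℤ) u : Fin (n+1) → ℤ) i + 1) →
              ((w 0 : ℝ)/N, pt q ε (Fin.tail w)) ∈ c y := by
            intro w hw
            obtain ⟨_, h2, h3⟩ := cellt w hw
            apply interior_subset
            apply hyb
            rw [Metric.mem_ball, Prod.dist_eq, max_lt_iff]
            exact ⟨by rw [Real.dist_eq]; exact h2, by rw [dist_eq_norm]; exact h3.trans_lt hεδ⟩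
          simp only [c] at hin
          split_ifs at hin with h1 h2
          · left
            intro w hw
            have a1 := hin w hw (cellt w hw).1
            have hw' : ∀ i, (Fin.cons (τ:ℤ) u : Fin (n+1) → ℤ) i = (Fin.cons (τ:ℤ) u : Fin (n+1) → ℤ) i ∨ (Fin.cons (τ:ℤ) u : Fin (n+1) → ℤ) i = (Fin.cons (τ:ℤ) u : Fin (n+1) → ℤ) i + 1 :=
              fun i => Or.inl rfl
            have a2 := hin _ hw' (cellt _ hw').1
            simp only at a1 a2 ⊢
            rw [a1, a2]
          · right
            exact ⟨h2.choose, fun w hw => hin w hw (cellt w hw).1⟩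
          · exfalso
            rcases hv y.1 hy.1 y.2 with h | h
            · exact h1 h
            · exact h2 h
        · left
          have hz : ∀ w : Fin (n+1) → ℤ, (∀ i, w i = (Fin.cons (τ:ℤ) u : Fin (n+1) → ℤ) i ∨ w i = (Fin.cons (τ:ℤ) u : Fin (n+1) → ℤ) i + 1) →
             e ((w 0 : ℝ)/N) (pt q ε (Fin.tail w)) = 0 := by
            intro w hw
            obtain ⟨h1, _, h3⟩ := cellt w hw
            by_contra hne
            have h4 := hR _ h1 _ hne
            apply hb
            have : pt q ε u = pt q ε (Fin.tail w) - (pt q ε (Fin.tail w) - pt q ε u) := by abel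
            rw [this]
            exact (norm_sub_le _ _).trans (by linarith)
          intro w hw
          rw [hz w hw, hz _ (fun i => Or.inl rfl)]
  have := step N le_rfl
  rwa [div_self hNpos.ne'] at this

end part2

section part3
open Equiv Set Filter Topology

lemma exists_lbl {n : ℕ} (y : Fin n → ℝ) : ∃ i : Fin (n+1),
    (∀ j, (Fin.cons 0 y : Fin (n+1) → ℝ) j ≤ (Fin.cons 0 y : Fin (n+1) → ℝ) i) ∧
    ∀ j < i, (Fin.cons 0 y : Fin (n+1) → ℝ) j < (Fin.cons 0 y : Fin (n+1) → ℝ) i := by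
  classical
  set z := (Fin.cons 0 y : Fin (n+1) → ℝ)
  let s : Finset (Fin (n+1)) := Finset.univ.filter fun i => ∀ j, z j ≤ z i
  have hs : s.Nonempty := by
    obtain ⟨i, -, hi⟩ := Finset.exists_max_image Finset.univ z ⟨0, Finset.mem_univ _⟩
    exact ⟨i, by simpa [s] using hi⟩
  have hm := Finset.min'_mem s hs
  have hm' : ∀ j, z j ≤ z (s.min' hs) := by simpa [s] using hm
  refine ⟨s.min' hs, hm', fun j hj => ?_⟩
  refine lt_of_le_of_ne (hm' j) fun heq => ?_
  have : j ∈ s := by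
    simp only [s, Finset.mem_filter, Finset.mem_univ, true_and]
    intro k; rw [heq]; exact hm' k
  exact absurd (Finset.min'_le s j this) (not_le.mpr hj)

noncomputable def lbl {n : ℕ} (y : Fin n → ℝ) : Fin (n+1) := (exists_lbl y).choose

lemma lbl_le {n : ℕ} (y : Fin n → ℝ) (j) :
    (Fin.cons 0 y : Fin (n+1) → ℝ) j ≤ (Fin.cons 0 y : Fin (n+1) → ℝ) (lbl y) :=
  (exists_lbl y).choose_spec.1 j

lemma lbl_lt {n : ℕ} (y : Fin n → ℝ) (j) (h : j < lbl y) :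
    (Fin.cons 0 y : Fin (n+1) → ℝ) j < (Fin.cons 0 y : Fin (n+1) → ℝ) (lbl y) :=
  (exists_lbl y).choose_spec.2 j h

lemma lbl_eq {n : ℕ} (y : Fin n → ℝ) (i : Fin (n+1))
    (h1 : ∀ j, (Fin.cons 0 y : Fin (n+1) → ℝ) j ≤ (Fin.cons 0 y : Fin (n+1) → ℝ) i)
    (h2 : ∀ j < i, (Fin.cons 0 y : Fin (n+1) → ℝ) j < (Fin.cons 0 y : Fin (n+1) → ℝ) i) : lbl y = i := by
  rcases lt_trichotomy (lbl y) i with h | h | h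
  · exact absurd (h2 _ h) (not_lt.mpr (lbl_le y i))
  · exact h
  · exact absurd (lbl_lt y _ h) (not_lt.mpr (h1 _))

lemma lbl_missing {n : ℕ} (y : Fin n → ℝ) (hy : y ≠ 0) : ∃ l, ∀ᶠ z in 𝓝 y, lbl z ≠ l := by
  have : ∃ i k : Fin (n+1), (Fin.cons 0 y : Fin (n+1) → ℝ) i < (Fin.cons 0 y : Fin (n+1) → ℝ) k := by
    by_contra hcon
    push Not at hcon
    apply hy
    funext i
    have h1 := hcon 0 i.succ
    have h2 := hcon i.succ 0
    simp at h1 h2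
    exact le_antisymm h1 h2
  obtain ⟨i, k, hik⟩ := this
  refine ⟨i, ?_⟩
  have hc : ∀ j : Fin (n+1), Continuous fun z : Fin n → ℝ => (Fin.cons 0 z : Fin (n+1) → ℝ) j := by
    intro j
    refine Fin.cases ?_ (fun j => ?_) j
    · simpa using continuous_const
    · simpa using continuous_apply j
  filter_upwards [(hc i).continuousAt.eventually_lt (hc k).continuousAt hik] with z hz h
  have := lbl_le z k
  rw [h] at this
  exact absurd hz (not_lt.mpr this)

lemma id_unique {n : ℕ} (ε : ℝ) (hε : 0 < ε) (u : Fin n → ℤ) (σ : Perm (Fin n))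
    (h : Function.Bijective (fun k : Fin (n+1) => lbl (fun i => ε * (vtx u σ k i : ℝ)))) :
    u = 0 ∧ ∀ a b : Fin n, σ a < σ b → b < a := by
  set l := (fun k : Fin (n+1) => lbl (fun i => ε * (vtx u σ k i : ℝ))) with hl
  have hle : ∀ (k : Fin (n+1)) j, (Fin.cons 0 (fun i => ε * (vtx u σ k i : ℝ)) : Fin (n+1) → ℝ) j ≤ (Fin.cons 0 (fun i => ε * (vtx u σ k i : ℝ)) : Fin (n+1) → ℝ) (l k) :=
    fun k j => lbl_le _ j
  have hlt : ∀ (k : Fin (n+1)) j, j < l k → (Fin.cons 0 (fun i => ε * (vtx u σ k i : ℝ)) : Fin (n+1) → ℝ) j < (Fin.cons 0 (fun i => ε * (vtx u σ k i : ℝ)) : Fin (n+1) → ℝ) (l k) :=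
    fun k j h => lbl_lt _ j h
  have hu : ∀ i, u i ≤ 0 := by
    obtain ⟨k, hk⟩ := h.2 0
    intro i
    have := hle k i.succ
    rw [hk] at this
    simp only [Fin.cons_succ, Fin.cons_zero] at this
    have h2 : (vtx u σ k i : ℝ) ≤ 0 := by nlinarith
    have h3 : vtx u σ k i ≤ 0 := by exact_mod_cast h2
    rcases vtx_cell u σ k i with h4 | h4 <;> omega
  have hl0 : l 0 = 0 := by
    by_contra hne
    have h1 := hlt 0 0 (Fin.pos_of_ne_zero hne)
    obtain ⟨j, hj⟩ := Fin.exists_succ_eq.mpr hne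
    rw [← hj] at h1
    simp only [Fin.cons_succ, Fin.cons_zero, Fin.val_zero, vtx_zero] at h1
    have : (u j : ℝ) ≤ 0 := by exact_mod_cast hu j
    nlinarith
  -- each later label
  have key : ∀ k : ℕ, ∀ hk : k < n, l ⟨k+1, by omega⟩ = (σ.symm ⟨k, hk⟩).succ ∧ u (σ.symm ⟨k, hk⟩) = 0 := by
    intro k
    induction k using Nat.strong_induction_on with
    | _ k ih =>
      intro hk
      have hne : l ⟨k+1, by omega⟩ ≠ 0 := by
        rw [← hl0]; intro h'
        have := h.1 h'
        simp [Fin.ext_iff] at this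
      obtain ⟨d, hd⟩ := Fin.exists_succ_eq.mpr hne
      have h1 := hlt ⟨k+1, by omega⟩ 0 (Fin.pos_of_ne_zero hne)
      rw [← hd] at h1
      simp only [Fin.cons_succ, Fin.cons_zero] at h1
      have h2 : (0:ℝ) < (vtx u σ (k+1) d : ℝ) := by
        by_contra hcon; push Not at hcon; nlinarith
      have h3 : 0 < vtx u σ (k+1) d := by exact_mod_cast h2
      have h4 := hu d
      unfold vtx at h3
      split_ifs at h3 with h5
      · have hu0 : u d = 0 := by omega
        rcases Nat.lt_succ_iff_lt_or_eq.mp h5 with h6 | h6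
        · exfalso
          have := (ih (σ d) h6 (by omega)).1
          simp only [Fin.eta, Equiv.symm_apply_apply] at this
          rw [hd, ] at this
          have := h.1 this
          simp [Fin.ext_iff] at this
          omega
        · have : σ.symm ⟨k, hk⟩ = d := by
            rw [Equiv.symm_apply_eq]; ext; exact h6.symm
          rw [this]
          exact ⟨hd.symm, hu0⟩
      · omega
  have hu0 : u = 0 := by
    funext i
    have := (key (σ i) (σ i).2).2
    simpa using this
  refine ⟨hu0, fun a b hab => ?_⟩
  by_contra hcon
  push Not at hcon
  have hne : a ≠ b := by rintro rfl; exact lt_irrefl _ hab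
  have hlt' : a < b := lt_of_le_of_ne hcon hne
  have hb := (key (σ b) (σ b).2).1
  simp only [Fin.eta, Equiv.symm_apply_apply] at hb
  have := hlt ⟨σ b + 1, by omega⟩ a.succ (by rw [hb]; exact Fin.succ_lt_succ_iff.mpr hlt')
  rw [hb] at this
  simp only [Fin.cons_succ, vtx, hu0] at this
  have h1 : (σ a : ℕ) < σ b + 1 := by have : (σ a : ℕ) < σ b := hab; omega
  have h2 : (σ b : ℕ) < σ b + 1 := by omega
  simp [h1] at this

lemma id_exists {n : ℕ} (ε : ℝ) (hε : 0 < ε) :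
    Function.Bijective (fun k : Fin (n+1) => lbl (fun i => ε * (vtx (0 : Fin n → ℤ) Fin.revPerm k i : ℝ))) := by
  have hl : ∀ k : Fin (n+1), ((lbl (fun i => ε * (vtx (0 : Fin n → ℤ) Fin.revPerm k i : ℝ)) : Fin (n+1)) : ℕ) = if k = 0 then 0 else n + 1 - k := by
    intro k
    by_cases hk : k = 0
    · subst hk
      rw [if_pos rfl, lbl_eq _ 0]
      · simp
      · intro j; refine Fin.cases ?_ (fun j => ?_) j <;> simp [vtx]
      · intro j hj; simp at hj
    · have hk' : 0 < (k:ℕ) := by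
        rcases Nat.eq_zero_or_pos (k:ℕ) with h | h
        · exact absurd (Fin.ext h) hk
        · exact h
      rw [if_neg hk]
      have hval : (Fin.cons 0 (fun i => ε * (vtx (0 : Fin n → ℤ) Fin.revPerm k i : ℝ)) : Fin (n+1) → ℝ) (Fin.succ ⟨n - k, by omega⟩) = ε := by
        rw [Fin.cons_succ]
        have : n - (n - (k:ℕ) + 1) < k := by omega
        simp [vtx, Fin.revPerm, Fin.val_rev, this]
      rw [lbl_eq _ (Fin.succ ⟨n - k, by omega⟩)]
      · simp; omega
      · rw [hval]
        intro j; refine Fin.cases ?_ (fun j => ?_) j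
        · simpa using hε.le
        · simp only [Fin.cons_succ, vtx]
          split_ifs <;> simp [hε.le]
      · rw [hval]
        intro j hj
        revert hj
        refine Fin.cases ?_ (fun j => ?_) j
        · intro _; simpa using hε
        · intro hj
          have hj' : (j:ℕ) < n - k := by
            have := Fin.succ_lt_succ_iff.mp hj
            exact this
          have : ¬ (n - ((j:ℕ) + 1) < k) := by omega
          simp [vtx, Fin.val_rev, this, hε]
  rw [← Finite.injective_iff_bijective]
  intro a b hab
  have h1 := hl a
  have h2 := hl b
  simp only at hab
  rw [hab, h2] at h1
  ext
  by_cases ha : a = 0 <;> by_cases hb : b = 0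
  · rw [ha, hb]
  · rw [if_neg hb, if_pos ha] at h1; omega
  · rw [if_pos hb, if_neg ha] at h1; omega
  · rw [if_neg hb, if_neg ha] at h1; omega

lemma anti_rev {n : ℕ} (σ : Perm (Fin n)) (h : ∀ a b : Fin n, σ a < σ b → b < a) : σ = Fin.revPerm := by
  have h' : StrictMono (σ.symm.trans Fin.revPerm) := by
    intro a b hab
    have := h (σ.symm a) (σ.symm b) (by simpa using hab)
    simpa using this
  have : (σ.symm.trans Fin.revPerm : Fin n → Fin n) = id := by
    apply StrictMono.range_inj h' strictMono_id |>.mp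
    rw [Set.range_id]
    exact (σ.symm.trans Fin.revPerm).surjective.range_eq
  ext i
  have := congrFun this (σ i)
  simp at this
  rw [← this]
  simp

theorem cnt_id {n : ℕ} (q : Fin n → ℝ) (ε : ℝ) (hε : 0 < ε) (e : (Fin n → ℝ) → ℤ) (he : e q = 1) :
    IsUnit (cntε q ε (fun x => lbl (x - q)) e) := by
  have hpt : ∀ w : Fin n → ℤ, pt q ε w - q = fun i => ε * (w i : ℝ) := by
    intro w; funext i; simp [pt]
  have hz : ∀ (u : Fin n → ℤ) (σ : Perm (Fin n)), (u ≠ 0 ∨ σ ≠ Fin.revPerm) →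
      lw (fun k : Fin (n+1) => lbl (fun i => ε * (vtx u σ k i : ℝ))) = 0 := by
    intro u σ hus
    by_contra hne
    have hsurj : Function.Surjective (fun k : Fin (n+1) => lbl (fun i => ε * (vtx u σ k i : ℝ))) := by
      intro l
      by_contra hcon
      push Not at hcon
      exact hne (lw_surj _ l hcon)
    obtain ⟨h1, h2⟩ := id_unique ε hε u σ (Finite.surjective_iff_bijective.mp hsurj)
    rcases hus with h | h
    · exact h h1
    · exact h (anti_rev σ h2)
  unfold cntε cnt
  simp only [hpt]
  rw [finsum_eq_single _ (0 : Fin n → ℤ)]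
  · rw [Finset.sum_eq_single Fin.revPerm]
    · have h0 : pt q ε 0 = q := by funext i; simp [pt]
      rw [h0, he, one_mul]
      rw [show lw (fun k : Fin (n+1) => lbl (fun i => ε * (vtx (0 : Fin n → ℤ) Fin.revPerm k i : ℝ))) = _ from
        lw_perm (Equiv.ofBijective _ (id_exists (n := n) ε hε))]
      exact (Units.isUnit _).mul (Units.isUnit _)
    · intro σ _ hσ
      rw [hz _ _ (Or.inr hσ), mul_zero, mul_zero]
    · simp
  · intro u hu
    refine Finset.sum_eq_zero fun σ _ => ?_
    rw [hz _ _ (Or.inl hu), mul_zero, mul_zero]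

end part3

section part4
open Equiv Set Filter Topology

lemma orbit_sum_inv {X Y : Type*} [AddCommMonoid Y] (h : X → X) (p : ℕ) (hper : ∀ z, h^[p] z = z) (F : X → Y) (z : X) :
    ∑ i ∈ Finset.range p, F (h^[i] (h z)) = ∑ i ∈ Finset.range p, F (h^[i] z) := by
  have h1 := Finset.sum_range_succ' (fun i => F (h^[i] z)) p
  have h2 := Finset.sum_range_succ (fun i => F (h^[i] z)) p
  cases p with
  | zero => simp
  | succ p =>
    rw [Finset.sum_range_succ' (fun i => F (h^[i] z)), Finset.sum_range_succ]
    simp only [← Function.iterate_succ_apply]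
    rw [hper]
    rfl

lemma iter_mapsTo {X : Type*} {h : X → X} {V : Set X} (hm : MapsTo h V V) (i : ℕ) : MapsTo h^[i] V V := hm.iterate i

lemma iter_cont {X : Type*} [TopologicalSpace X] {h : X → X} {V : Set X} (hm : MapsTo h V V)
    (hc : ContinuousOn h V) (i : ℕ) : ContinuousOn h^[i] V := by
  induction i with
  | zero => exact continuousOn_id
  | succ i ih =>
    rw [Function.iterate_succ']
    exact hc.comp ih (hm.iterate i)

lemma f_iter {X Y : Type*} {h : X → X} {f : X → Y} (hf : ∀ z, f (h z) = f z) (i : ℕ) (z : X) : f (h^[i] z) = f z := by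
  induction i with
  | zero => rfl
  | succ i ih => rw [Function.iterate_succ_apply', hf, ih]

open MeasureTheory in
lemma smooth_avoid {n : ℕ} (F : (Fin n → ℝ) → (Fin n → ℝ)) (hF : Continuous F) (z q : Fin n → ℝ) (ρ d : ℝ) (hρ : 0 < ρ)
    (hd : 0 < d) : ∃ g : (Fin n → ℝ) → (Fin n → ℝ), Continuous g ∧ (∀ y, ‖g y - F y‖ ≤ d) ∧ ∀ y ∈ Metric.sphere z ρ, g y ≠ q := by
  obtain ⟨g, hg, hgF, -⟩ := hF.exists_contDiff_approx (n := (1 : ℕ∞)) (ε := fun _ => d/2) continuous_const (fun _ => by positivity)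
  have hms : (volume : Measure (Fin n → ℝ)) (Metric.sphere z ρ) = 0 := Measure.addHaar_sphere_of_ne_zero _ _ hρ.ne'
  have hdiff : Differentiable ℝ g := hg.differentiable (by simp)
  have hmi : (volume : Measure (Fin n → ℝ)) (g '' Metric.sphere z ρ) = 0 :=
    addHaar_image_eq_zero_of_differentiableOn_of_addHaar_eq_zero _ hdiff.differentiableOn hms
  have hpos : 0 < (volume : Measure (Fin n → ℝ)) (Metric.ball q (d/2)) := Metric.measure_ball_pos _ _ (by positivity)
  have : ∃ c ∈ Metric.ball q (d/2), c ∉ g '' Metric.sphere z ρ := by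
    by_contra hcon
    push Not at hcon
    have := measure_mono (μ := (volume : Measure (Fin n → ℝ))) hcon
    rw [hmi] at this
    exact absurd hpos (not_lt.mpr this)
  obtain ⟨c, hc, hcg⟩ := this
  refine ⟨fun y => g y + (q - c), by fun_prop, fun y => ?_, fun y hy h => ?_⟩
  · have h1 := hgF y
    rw [dist_eq_norm] at h1
    rw [Metric.mem_ball, dist_comm, dist_eq_norm] at hc
    have : g y + (q - c) - F y = (g y - F y) + (q - c) := by abel
    rw [this]
    refine (norm_add_le _ _).trans ?_
    linarith
  · apply hcg
    refine ⟨y, hy, ?_⟩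
    have h' : g y + (q - c) = q := h
    have : g y + (q - c) = c + (q - c) := by rw [h']; abel
    exact add_right_cancel this

theorem perturb1 {n p : ℕ} (hp : p.Prime) (V : Set (Fin n → ℝ)) (h : (Fin n → ℝ) → (Fin n → ℝ))
    (hm : MapsTo h V V) (hc : ContinuousOn h V) (hper : ∀ z, h^[p] z = z)
    (f : (Fin n → ℝ) → (Fin n → ℝ)) (hf : ContinuousOn f V) (finv : ∀ z, f (h z) = f z)
    (q z : Fin n → ℝ) (ρ : ℝ) (hρ : 0 < ρ) (hball : Metric.closedBall z (2*ρ) ⊆ V)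
    (hdis : ∀ y ∈ Metric.closedBall z (2*ρ), ∀ i, 0 < i → i < p → h^[i] y ∉ Metric.closedBall z (2*ρ))
    (d : ℝ) (hd : 0 < d) :
    ∃ f' : (Fin n → ℝ) → (Fin n → ℝ), ContinuousOn f' V ∧ (∀ z, f' (h z) = f' z) ∧ (∀ z, ‖f' z - f z‖ ≤ d) ∧
      ∀ y ∈ Metric.sphere z ρ, f' y ≠ q := by
  have hp0 : (0:ℝ) < p := by exact_mod_cast hp.pos
  obtain ⟨F, hF⟩ := ContinuousMap.exists_restrict_eq (Metric.isClosed_closedBall (x := z) (ε := 2*ρ))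
    (⟨(Metric.closedBall z (2*ρ)).restrict f, (hf.mono hball).restrict⟩ : C(Metric.closedBall z (2*ρ), Fin n → ℝ))
  have hFf : ∀ y ∈ Metric.closedBall z (2*ρ), F y = f y := fun y hy => by
    have := DFunLike.congr_fun hF ⟨y, hy⟩
    exact this
  obtain ⟨g, hg, hgF, hgq⟩ := smooth_avoid F F.continuous z q ρ (d/p) hρ (by positivity)
  let χ : (Fin n → ℝ) → ℝ := fun y => max 0 (min 1 (2 - dist y z / ρ))
  have hχc : Continuous χ := by
    simp only [χ]; fun_prop
  have hχ0 : ∀ y, 0 ≤ χ y := fun y => le_max_left _ _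
  have hχ1 : ∀ y, χ y ≤ 1 := fun y => max_le zero_le_one (min_le_left _ _)
  have hχz : ∀ y, y ∉ Metric.closedBall z (2*ρ) → χ y = 0 := by
    intro y hy
    rw [Metric.mem_closedBall, not_le] at hy
    have : 2 < dist y z / ρ := by rwa [lt_div_iff₀ hρ]
    simp only [χ]
    apply max_eq_left
    exact (min_le_right _ _).trans (by linarith)
  have hχs : ∀ y ∈ Metric.sphere z ρ, χ y = 1 := by
    intro y hy
    rw [Metric.mem_sphere] at hy
    simp only [χ, hy, div_self hρ.ne']
    norm_num
  refine ⟨fun y => f y + ∑ i ∈ Finset.range p, χ (h^[i] y) • (g (h^[i] y) - f (h^[i] y)), ?_, ?_, ?_, ?_⟩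
  · refine hf.add (continuousOn_finsetSum _ fun i _ => ?_)
    have hi := iter_cont hm hc i
    exact (hχc.comp_continuousOn hi).smul ((hg.comp_continuousOn hi).sub (hf.comp hi (hm.iterate i)))
  · intro y
    simp only
    rw [finv, orbit_sum_inv h p hper (fun w => χ w • (g w - f w))]
  · intro y
    rw [add_sub_cancel_left]
    have : ∀ i ∈ Finset.range p, ‖χ (h^[i] y) • (g (h^[i] y) - f (h^[i] y))‖ ≤ d / p := by
      intro i _
      by_cases hw : h^[i] y ∈ Metric.closedBall z (2*ρ)
      · rw [norm_smul, Real.norm_eq_abs, abs_of_nonneg (hχ0 _), ← hFf _ hw]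
        calc _ ≤ 1 * (d / p) := mul_le_mul (hχ1 _) (hgF _) (norm_nonneg _) zero_le_one
          _ = _ := one_mul _
      · rw [hχz _ hw, zero_smul, norm_zero]; positivity
    refine (norm_sum_le_of_le _ this).trans ?_
    simp
    rw [mul_div_cancel₀ _ hp0.ne']
  · intro y hy
    have hyb : y ∈ Metric.closedBall z (2*ρ) := by
      rw [Metric.mem_closedBall, Metric.mem_sphere.mp hy]; linarith
    have : ∑ i ∈ Finset.range p, χ (h^[i] y) • (g (h^[i] y) - f (h^[i] y)) = g y - f y := by
      rw [Finset.sum_eq_single 0]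
      · simp [hχs y hy]
      · intro i hi h0
        rw [hχz _ (hdis y hyb i (Nat.pos_of_ne_zero h0) (Finset.mem_range.mp hi)), zero_smul]
      · intro h; exact absurd (Finset.mem_range.mpr hp.pos) h
    simp only [this]
    rw [add_sub_cancel]
    exact hgq y hy

lemma compact_bound {α β : Type*} [TopologicalSpace α] [NormedAddCommGroup β] {K : Set α} (hK : IsCompact K) (f : α → β)
    (hf : ContinuousOn f K) (q : β) (h : ∀ x ∈ K, f x ≠ q) : ∃ d > 0, ∀ x ∈ K, d < ‖f x - q‖ := by
  rcases K.eq_empty_or_nonempty with rfl | hne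
  · exact ⟨1, one_pos, by simp⟩
  obtain ⟨x, hx, hmin⟩ := hK.exists_isMinOn hne ((hf.sub continuousOn_const).norm : ContinuousOn (fun x => ‖f x - q‖) K)
  have hpos : 0 < ‖f x - q‖ := norm_pos_iff.mpr (sub_ne_zero.mpr (h x hx))
  exact ⟨‖f x - q‖/2, by positivity, fun y hy => by
    have this : ‖f x - q‖ ≤ ‖f y - q‖ := hmin hy
    linarith⟩

lemma prime_free {X : Type*} {p : ℕ} (hp : p.Prime) (h : X → X) (hper : ∀ z, h^[p] z = z) (z : X) (hz : h z ≠ z) (i : ℕ)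
    (hi : 0 < i) (hip : i < p) : h^[i] z ≠ z := by
  intro hc
  have h1 : Function.IsPeriodicPt h i z := hc
  have h2 : Function.IsPeriodicPt h p z := hper z
  have h3 := h1.gcd h2
  have : Nat.gcd i p = 1 := Nat.Coprime.symm ((Nat.Prime.coprime_iff_not_dvd hp).mpr (Nat.not_dvd_of_pos_of_lt hi hip))
  rw [this] at h3
  exact hz h3

theorem perturb2 {n p : ℕ} (hp : p.Prime) (V : Set (Fin n → ℝ)) (h : (Fin n → ℝ) → (Fin n → ℝ))
    (hm : MapsTo h V V) (hc : ContinuousOn h V) (hper : ∀ z, h^[p] z = z)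
    (f : (Fin n → ℝ) → (Fin n → ℝ)) (hf : ContinuousOn f V) (finv : ∀ z, f (h z) = f z)
    (q : Fin n → ℝ) (c : ℕ → Fin n → ℝ) (ρ : ℕ → ℝ) (m : ℕ) (hρ : ∀ j < m, 0 < ρ j)
    (hball : ∀ j < m, Metric.closedBall (c j) (2*ρ j) ⊆ V)
    (hdis : ∀ j < m, ∀ y ∈ Metric.closedBall (c j) (2*ρ j), ∀ i, 0 < i → i < p → h^[i] y ∉ Metric.closedBall (c j) (2*ρ j))
    (d : ℝ) (hd : 0 < d) :
    ∃ f' : (Fin n → ℝ) → (Fin n → ℝ), ContinuousOn f' V ∧ (∀ z, f' (h z) = f' z) ∧ (∀ z, ‖f' z - f z‖ ≤ d) ∧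
      ∀ j < m, ∀ y ∈ Metric.sphere (c j) (ρ j), f' y ≠ q := by
  induction m generalizing d with
  | zero => exact ⟨f, hf, finv, fun z => by simp [hd.le], by simp⟩
  | succ m ih =>
    obtain ⟨f1, hf1, finv1, hcl1, hav1⟩ := ih (fun j hj => hρ j (by omega)) (fun j hj => hball j (by omega))
      (fun j hj => hdis j (by omega)) (d/2) (by positivity)
    have hK : IsCompact (⋃ j ∈ Finset.range m, Metric.sphere (c j) (ρ j)) :=
      (Finset.range m).isCompact_biUnion fun j _ => isCompact_sphere _ _
    have hKV : (⋃ j ∈ Finset.range m, Metric.sphere (c j) (ρ j)) ⊆ V := by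
      intro y hy
      simp only [mem_iUnion, Finset.mem_range] at hy
      obtain ⟨j, hj, hy⟩ := hy
      apply hball j (by omega)
      rw [Metric.mem_closedBall, Metric.mem_sphere.mp hy]
      linarith [hρ j (by omega)]
    obtain ⟨e, he, heb⟩ := compact_bound hK f1 (hf1.mono hKV) q (by
      intro y hy
      simp only [mem_iUnion, Finset.mem_range] at hy
      obtain ⟨j, hj, hy⟩ := hy
      exact hav1 j hj y hy)
    obtain ⟨f2, hf2, finv2, hcl2, hav2⟩ := perturb1 hp V h hm hc hper f1 hf1 finv1 q (c m) (ρ m) (hρ m (by omega))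
      (hball m (by omega)) (hdis m (by omega)) (min (d/2) e) (by positivity)
    refine ⟨f2, hf2, finv2, fun z => ?_, fun j hj y hy => ?_⟩
    · have : f2 z - f z = (f2 z - f1 z) + (f1 z - f z) := by abel
      rw [this]
      have h1 := (hcl2 z).trans (min_le_left _ _)
      exact (norm_add_le _ _).trans (by linarith [hcl1 z])
    · rcases Nat.lt_succ_iff_lt_or_eq.mp hj with h1 | h1
      · intro h2
        have h3 := heb y (by
          simp only [mem_iUnion, Finset.mem_range]
          exact ⟨j, h1, hy⟩)
        have h4 := (hcl2 y).trans (min_le_right _ _)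
        rw [h2, norm_sub_rev] at h4
        linarith
      · subst h1
        exact hav2 y hy

/-- iterate indexed by residues -/
def act {X : Type*} (h : X → X) (p : ℕ) (i : ZMod p) (y : X) : X := h^[i.val] y

lemma act_h {X : Type*} {h : X → X} {p : ℕ} (hp : 1 < p) (hper : ∀ z, h^[p] z = z) (i : ZMod p) (y : X) :
    act h p i (h y) = act h p (i+1) y := by
  unfold act
  haveI : Fact (1 < p) := ⟨hp⟩
  haveI : NeZero p := ⟨by omega⟩
  have h2 : Function.IsPeriodicPt h p y := hper y
  have h3 : (i+1).val = (i.val+1) % p := by rw [ZMod.val_add, ZMod.val_one]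
  rw [← Function.iterate_succ_apply, h3]
  exact (h2.iterate_mod_apply _).symm

theorem perturb {n p : ℕ} (hp : p.Prime) (V : Set (Fin n → ℝ)) (hV : IsOpen V) (h : (Fin n → ℝ) → (Fin n → ℝ))
    (hm : MapsTo h V V) (hc : ContinuousOn h V) (hper : ∀ z, h^[p] z = z)
    (f : (Fin n → ℝ) → (Fin n → ℝ)) (hf : ContinuousOn f V) (finv : ∀ z, f (h z) = f z)
    (C : Set (Fin n → ℝ)) (hC : IsCompact C) (hCV : C ⊆ V) (q : Fin n → ℝ) (hz : ∀ z ∈ C, f z = q → h z ≠ z)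
    (d : ℝ) (hd : 0 < d) :
    ∃ (f' : (Fin n → ℝ) → (Fin n → ℝ)) (W : Set (Fin n → ℝ)) (κ : (Fin n → ℝ) → ZMod p),
      ContinuousOn f' V ∧ (∀ z, f' (h z) = f' z) ∧ (∀ z, ‖f' z - f z‖ ≤ d) ∧
      (∀ z, h z ∈ W ↔ z ∈ W) ∧ (∀ z ∈ W, κ (h z) = κ z + 1) ∧
      ∀ z ∈ C, f' z = q → ∀ᶠ y in 𝓝 z, y ∈ W ∧ κ y = κ z := by
  haveI : NeZero p := ⟨hp.pos.ne'⟩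
  have hZ : IsCompact (C ∩ f ⁻¹' {q}) := by
    have : IsClosed (C ∩ f ⁻¹' {q}) := (hf.mono hCV).preimage_isClosed_of_isClosed hC.isClosed isClosed_singleton
    exact hC.of_isClosed_subset this inter_subset_left
  have hloc : ∀ z ∈ C ∩ f ⁻¹' {q}, ∃ r > 0, Metric.closedBall z (2*r) ⊆ V ∧
      ∀ y ∈ Metric.closedBall z (2*r), ∀ i, 0 < i → i < p → h^[i] y ∉ Metric.closedBall z (2*r) := by
    rintro z ⟨hzC, hzq⟩
    have hzV := hCV hzC
    have hnf := hz z hzC hzq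
    have : ∀ i ∈ Finset.range p, ∃ r > 0, ∀ s ≤ r, 0 < i → ∀ y ∈ Metric.closedBall z s, h^[i] y ∉ Metric.closedBall z s := by
      intro i hi
      by_cases hi0 : 0 < i
      · have hne := prime_free hp h hper z hnf i hi0 (Finset.mem_range.mp hi)
        have hD : 0 < dist (h^[i] z) z := dist_pos.mpr hne
        have hca : ContinuousAt h^[i] z := (iter_cont hm hc i).continuousAt (hV.mem_nhds hzV)
        obtain ⟨r, hr, hrr⟩ := Metric.continuousAt_iff.mp hca (dist (h^[i] z) z / 2) (by positivity)
        refine ⟨min (r/2) (dist (h^[i] z) z / 3), by positivity, fun s hs _ y hy hy2 => ?_⟩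
        rw [Metric.mem_closedBall] at hy hy2
        have h1 := hs.trans (min_le_left _ _)
        have h2 := hs.trans (min_le_right _ _)
        have h3 := hrr (show dist y z < r by linarith)
        have h4 := dist_triangle_left (h^[i] z) z (h^[i] y)
        linarith
      · exact ⟨1, one_pos, fun s _ h => absurd h hi0⟩
    choose! r hr hrr using this
    obtain ⟨r0, hr0, hr0V⟩ := Metric.nhds_basis_closedBall.mem_iff.mp (hV.mem_nhds hzV)
    have hne : (Finset.range p).Nonempty := ⟨0, Finset.mem_range.mpr hp.pos⟩
    set r1 := (Finset.range p).inf' hne r with hr1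
    have hr1pos : 0 < r1 := by
      rw [hr1, Finset.lt_inf'_iff]; exact hr
    refine ⟨min r0 r1 / 2, by positivity, ?_, ?_⟩
    · rw [mul_div_cancel₀ _ two_ne_zero]
      exact (Metric.closedBall_subset_closedBall (min_le_left _ _)).trans hr0V
    · rw [mul_div_cancel₀ _ two_ne_zero]
      intro y hy i hi0 hip
      have him := Finset.mem_range.mpr hip
      exact hrr i him _ ((min_le_right _ _).trans (Finset.inf'_le _ him)) hi0 y hy
  choose! r hr hrV hrd using hloc
  obtain ⟨t, htZ, hcov⟩ := hZ.elim_nhds_subcover (fun z => Metric.ball z (r z)) (fun z hz => Metric.ball_mem_nhds _ (hr z hz))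
  -- enumerate t
  set m := t.card with hmdef
  let c : ℕ → (Fin n → ℝ) := fun j => if hj : j < m then (t.equivFin.symm ⟨j, hj⟩ : Fin n → ℝ) else 0
  have hct : ∀ j < m, c j ∈ t := by
    intro j hj
    simp only [c, dif_pos hj]
    exact Subtype.coe_prop _
  have hcz : ∀ z ∈ t, ∃ j < m, c j = z := by
    intro z hz
    refine ⟨t.equivFin ⟨z, hz⟩, Fin.is_lt _, ?_⟩
    simp [c, hmdef]
  have hC2 : IsCompact (C \ ⋃ z ∈ t, Metric.ball z (r z)) := hC.diff (isOpen_biUnion fun z _ => Metric.isOpen_ball)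
  obtain ⟨d2, hd2, hd2b⟩ := compact_bound hC2 f (hf.mono (diff_subset.trans hCV)) q (by
    rintro y ⟨hyC, hyn⟩ hyq
    exact hyn (hcov ⟨hyC, hyq⟩))
  obtain ⟨f', hf', finv', hcl', hav'⟩ := perturb2 hp V h hm hc hper f hf finv q c (fun j => r (c j)) m
    (fun j hj => hr _ (htZ _ (hct j hj))) (fun j hj => hrV _ (htZ _ (hct j hj))) (fun j hj => hrd _ (htZ _ (hct j hj)))
    (min d d2) (by positivity)
  -- the predicate
  let R : ℕ → ZMod p → (Fin n → ℝ) → Prop := fun j i y => j < m ∧ act h p i y ∈ Metric.closedBall (c j) (r (c j))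
  let Good : ℕ → ZMod p → (Fin n → ℝ) → Prop := fun j i y => R j i y ∧ ∀ j' < j, ∀ i', ¬ R j' i' y
  have hRh : ∀ j i y, R j i (h y) ↔ R j (i+1) y := by
    intro j i y; simp only [R, act_h hp.one_lt hper]
  have hGh : ∀ j i y, Good j i (h y) ↔ Good j (i+1) y := by
    intro j i y
    simp only [Good, hRh]
    refine and_congr_right fun _ => forall₂_congr fun j' _ => ?_
    constructor
    · intro hh i'
      have := hh (i' - 1)
      rwa [sub_add_cancel] at this
    · intro hh i'; exact hh _
  have hRu : ∀ j i i' y, R j i y → R j i' y → i = i' := by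
    have aux : ∀ j (i i' : ZMod p) y, i.val < i'.val → R j i y → R j i' y → False := by
      rintro j i i' y hlt ⟨hj, h1⟩ ⟨_, h2⟩
      have hrj := hr _ (htZ _ (hct j hj))
      have hsub : Metric.closedBall (c j) (r (c j)) ⊆ Metric.closedBall (c j) (2 * r (c j)) :=
        Metric.closedBall_subset_closedBall (by linarith)
      have h3 := hrd _ (htZ _ (hct j hj)) _ (hsub h1) (i'.val - i.val) (by omega) (by have := ZMod.val_lt i'; omega)
      apply h3
      apply hsub
      unfold act
      rw [← Function.iterate_add_apply, Nat.sub_add_cancel hlt.le]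
      exact h2
    intro j i i' y h1 h2
    rcases lt_trichotomy i.val i'.val with h3 | h3 | h3
    · exact (aux _ _ _ _ h3 h1 h2).elim
    · exact ZMod.val_injective p h3
    · exact (aux _ _ _ _ h3 h2 h1).elim
  have hGu : ∀ j i j' i' y, Good j i y → Good j' i' y → i = i' := by
    intro j i j' i' y h1 h2
    rcases lt_trichotomy j j' with h3 | h3 | h3
    · exact absurd h1.1 (h2.2 _ h3 _)
    · subst h3; exact hRu _ _ _ _ h1.1 h2.1
    · exact absurd h2.1 (h1.2 _ h3 _)
  classical
  let W : Set (Fin n → ℝ) := {y | ∃ i j, Good j i y}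
  let κ : (Fin n → ℝ) → ZMod p := fun y => if hy : ∃ i j, Good j i y then - hy.choose else 0
  have hκ : ∀ j i y, Good j i y → κ y = -i := by
    intro j i y hg
    have hy : ∃ i j, Good j i y := ⟨i, j, hg⟩
    simp only [κ, dif_pos hy]
    obtain ⟨j', hj'⟩ := hy.choose_spec
    rw [hGu _ _ _ _ _ hj' hg]
  refine ⟨f', W, κ, hf', finv', fun z => (hcl' z).trans (min_le_left _ _), ?_, ?_, ?_⟩
  · intro z
    constructor
    · rintro ⟨i, j, hg⟩
      exact ⟨i+1, j, (hGh _ _ _).mp hg⟩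
    · rintro ⟨i, j, hg⟩
      exact ⟨i-1, j, (hGh _ _ _).mpr (by rwa [sub_add_cancel])⟩
  · rintro z ⟨i, j, hg⟩
    rw [hκ j i z hg, hκ j (i-1) (h z) ((hGh _ _ _).mpr (by rwa [sub_add_cancel]))]
    ring
  · intro z hzC hzq
    have hzV := hCV hzC
    have hact : ∀ i, ContinuousAt (act h p i) z := fun i => (iter_cont hm hc _).continuousAt (hV.mem_nhds hzV)
    have hex : ∃ j, ∃ i, R j i z := by
      have : z ∈ ⋃ z ∈ t, Metric.ball z (r z) := by
        by_contra hn
        have h1 := hd2b z ⟨hzC, hn⟩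
        have h2 := (hcl' z).trans (min_le_right _ _)
        rw [hzq, norm_sub_rev] at h2
        linarith
      simp only [mem_iUnion] at this
      obtain ⟨w, hw, hzw⟩ := this
      obtain ⟨j, hj, hjw⟩ := hcz w hw
      refine ⟨j, 0, hj, ?_⟩
      rw [hjw]
      simpa [act] using Metric.ball_subset_closedBall hzw
    obtain ⟨i, hi⟩ := Nat.find_spec hex
    set j := Nat.find hex with hj
    have hg : Good j i z := ⟨hi, fun j' hj' i' hR => Nat.find_min hex hj' ⟨i', hR⟩⟩
    have hjm : j < m := hi.1
    have e1 : ∀ᶠ y in 𝓝 z, R j i y := by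
      have hb : act h p i z ∈ Metric.ball (c j) (r (c j)) := by
        have h1 := hi.2
        rw [Metric.mem_closedBall] at h1
        rw [Metric.mem_ball]
        refine lt_of_le_of_ne h1 fun heq => ?_
        apply hav' j hjm (act h p i z) heq
        rw [← hzq]
        exact f_iter finv' _ _
      filter_upwards [(hact i).preimage_mem_nhds (Metric.isOpen_ball.mem_nhds hb)] with y hy
      exact ⟨hjm, Metric.ball_subset_closedBall hy⟩
    have e2 : ∀ᶠ y in 𝓝 z, ∀ j' ∈ Finset.range j, ∀ i', ¬ R j' i' y := by
      rw [Filter.eventually_all_finset]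
      intro j' hj'
      rw [Filter.eventually_all]
      intro i'
      have h1 := hg.2 j' (Finset.mem_range.mp hj') i'
      have hj'm : j' < m := lt_trans (Finset.mem_range.mp hj') hjm
      have h2 : act h p i' z ∈ (Metric.closedBall (c j') (r (c j')))ᶜ := fun hh => h1 ⟨hj'm, hh⟩
      filter_upwards [(hact i').preimage_mem_nhds (Metric.isClosed_closedBall.isOpen_compl.mem_nhds h2)] with y hy hR
      exact hy hR.2
    filter_upwards [e1, e2] with y h1 h2
    have hgy : Good j i y := ⟨h1, fun j' hj' => h2 j' (Finset.mem_range.mpr hj')⟩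
    exact ⟨⟨i, j, hgy⟩, by rw [hκ _ _ _ hgy, hκ _ _ _ hg]⟩

end part4

section part5
open Equiv Set Filter Topology

lemma cnt_add {n : ℕ} {ι : Type*} [Fintype ι] (q : Fin n → ℝ) (ε : ℝ) (hε : 0 < ε) (lab : (Fin n → ℝ) → Fin (n+1))
    (e : (Fin n → ℝ) → ℤ) (e' : ι → (Fin n → ℝ) → ℤ) (R : ℝ) (hR : ∀ i x, e' i x ≠ 0 → ‖x‖ ≤ R)
    (hs : ∀ x, e x = ∑ i, e' i x) : cntε q ε lab e = ∑ i, cntε q ε lab (e' i) := by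
  unfold cntε cnt
  rw [← finsum_sum_comm]
  · refine finsum_congr fun u => ?_
    rw [Finset.sum_comm]
    refine Finset.sum_congr rfl fun σ _ => ?_
    simp only [hs]
    rw [Finset.sum_mul, Finset.mul_sum]
  · intro i _
    refine (fin_supp q ε hε (e' i) R (hR i)).subset fun u hu => ?_
    rw [Function.mem_support] at hu
    intro h0
    apply hu
    simp [h0]

theorem local_contra {n p : ℕ} (hp : p.Prime) (V : Set (Fin n → ℝ)) (hV : IsOpen V) (h : (Fin n → ℝ) → (Fin n → ℝ))
    (hm : MapsTo h V V) (hc : ContinuousOn h V) (hoff : ∀ z, z ∉ V → h z = z) (hper : ∀ z, h^[p] z = z)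
    (b : Fin n → ℝ) (hbV : b ∈ V) (hb : h b = b) (ℓ : (Fin n → ℝ) →L[ℝ] ℝ)
    (hℓ1 : ∀ z, h z ≠ z → ℓ z ≤ ℓ b)
    (hℓ2 : ∀ O ∈ 𝓝 b, ∃ η > 0, ∀ z, h z ≠ z → ℓ b - η < ℓ z → z ∈ O)
    (hcl : ∀ O ∈ 𝓝 b, ∃ z ∈ O, h z ≠ z) : False := by
  have hp0 : (0:ℝ) < p := by exact_mod_cast hp.pos
  have hp1 : (1:ℝ) ≤ p := by exact_mod_cast hp.one_lt.le
  have hleft : ∀ z, h^[p-1] (h z) = z := fun z => by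
    rw [← Function.iterate_succ_apply, Nat.succ_eq_add_one, Nat.sub_add_cancel hp.one_lt.le, hper]
  have hinj : Function.Injective h := fun x y hxy => by
    rw [← hleft x, hxy, hleft]
  have hnf : ∀ z, h z ≠ z → ∀ i, h (h^[i] z) ≠ h^[i] z := by
    intro z hz i heq
    rw [← Function.iterate_succ_apply' h, Function.iterate_succ_apply] at heq
    exact hz (hinj.iterate i heq)
  have hfixi : ∀ z, h z = z → ∀ i, h^[i] z = z := fun z hz i => Function.iterate_fixed hz i
  obtain ⟨r, hr, hrV⟩ := Metric.nhds_basis_closedBall.mem_iff.mp (hV.mem_nhds hbV)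
  let U : Set (Fin n → ℝ) := {z | z ∈ V ∧ ∀ i, h^[i] z ∈ Metric.ball b r}
  have hUo : IsOpen U := by
    rw [isOpen_iff_mem_nhds]
    rintro z ⟨hzV, hz⟩
    have : ∀ᶠ y in 𝓝 z, ∀ i ∈ Finset.range p, h^[i] y ∈ Metric.ball b r := by
      rw [Filter.eventually_all_finset]
      intro i _
      exact ((iter_cont hm hc i).continuousAt (hV.mem_nhds hzV)).preimage_mem_nhds (Metric.isOpen_ball.mem_nhds (hz i))
    filter_upwards [this, hV.mem_nhds hzV] with y hy hyV
    refine ⟨hyV, fun i => ?_⟩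
    have h2 : Function.IsPeriodicPt h p y := hper y
    rw [← h2.iterate_mod_apply]
    exact hy _ (Finset.mem_range.mpr (Nat.mod_lt _ hp.pos))
  have hU1 : ∀ z, z ∈ U → h z ∈ U := fun z hz => ⟨hm hz.1, fun i => by
    rw [← Function.iterate_succ_apply]; exact hz.2 _⟩
  have hUi : ∀ i z, z ∈ U → h^[i] z ∈ U := by
    intro i
    induction i with
    | zero => exact fun z hz => hz
    | succ i ih => exact fun z hz => ih _ (hU1 z hz)
  have hUinv : ∀ z, h z ∈ U ↔ z ∈ U := fun z => ⟨fun hz => by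
    have := hUi (p-1) _ hz
    rwa [hleft] at this, hU1 z⟩
  have hUinvi : ∀ i z, h^[i] z ∈ U → z ∈ U := by
    intro i
    induction i with
    | zero => exact fun z hz => hz
    | succ i ih => exact fun z hz => (hUinv z).mp (ih _ hz)
  have hbU : b ∈ U := ⟨hbV, fun i => by rw [hfixi b hb]; exact Metric.mem_ball_self hr⟩
  have hUb : U ⊆ Metric.closedBall b r := fun z hz => Metric.ball_subset_closedBall (hz.2 0)
  have hcUb : closure U ⊆ Metric.closedBall b r := closure_minimal hUb Metric.isClosed_closedBall
  have hcUV : closure U ⊆ V := hcUb.trans hrV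
  have hcUc : IsCompact (closure U) := (isCompact_closedBall b r).of_isClosed_subset isClosed_closure hcUb
  obtain ⟨η, hη, hηU⟩ := hℓ2 U (hUo.mem_nhds hbU)
  obtain ⟨q, ⟨hqU, hqℓ⟩, hqn⟩ := hcl (U ∩ {z | ℓ b - η / p < ℓ z}) (by
    apply Filter.inter_mem (hUo.mem_nhds hbU)
    apply IsOpen.mem_nhds (isOpen_lt continuous_const ℓ.continuous)
    simp only [mem_setOf_eq]
    have : 0 < η / p := by positivity
    linarith)
  simp only [mem_setOf_eq] at hqℓ
  have hηp : η / p ≤ η := div_le_self hη.le hp1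
  let f : (Fin n → ℝ) → (Fin n → ℝ) := fun z => (p:ℝ)⁻¹ • ∑ i ∈ Finset.range p, h^[i] z
  have hfc : ContinuousOn f V := by
    have h0 : ContinuousOn (fun z => ∑ i ∈ Finset.range p, h^[i] z) V :=
      continuousOn_finsetSum _ fun i _ => iter_cont hm hc i
    exact (continuousOn_const (c := (p:ℝ)⁻¹)).smul h0
  have finv : ∀ z, f (h z) = f z := fun z => by
    simp only [f]
    rw [orbit_sum_inv h p hper (fun w => w)]
  have hffix : ∀ z, h z = z → f z = z := fun z hz => by
    simp only [f, hfixi z hz, Finset.sum_const, Finset.card_range]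
    rw [← Nat.cast_smul_eq_nsmul ℝ, smul_smul, inv_mul_cancel₀ hp0.ne', one_smul]
  have hℓf : ∀ z, p * ℓ (f z) = ∑ i ∈ Finset.range p, ℓ (h^[i] z) := fun z => by
    simp only [f, map_smul, map_sum, smul_eq_mul]
    rw [← mul_assoc, mul_inv_cancel₀ hp0.ne', one_mul]
  have K1 : ∀ z s, s ∈ Icc (0:ℝ) 1 → (1-s) • z + s • f z = q → z ∈ U ∧ h z ≠ z := by
    intro z s hs hq
    have hzn : h z ≠ z := by
      intro hz
      rw [hffix z hz, ← add_smul, sub_add_cancel, one_smul] at hq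
      rw [← hq] at hqn
      exact hqn hz
    refine ⟨?_, hzn⟩
    have : ∃ i, ℓ b - η < ℓ (h^[i] z) := by
      by_contra hcon
      push Not at hcon
      have h1 : p * ℓ (f z) ≤ p * (ℓ b - η) := by
        rw [hℓf]
        refine (Finset.sum_le_card_nsmul _ _ (ℓ b - η) fun i _ => hcon i).trans ?_
        simp
      have h2 : ℓ (f z) ≤ ℓ b - η := le_of_mul_le_mul_left h1 hp0
      have h3 : ℓ z ≤ ℓ b - η := hcon 0
      have h4 : ℓ q = (1-s) * ℓ z + s * ℓ (f z) := by
        rw [← hq]; simp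
      have h5 : (1-s) * ℓ z ≤ (1-s) * (ℓ b - η) := mul_le_mul_of_nonneg_left h3 (by linarith [hs.2])
      have h6 : s * ℓ (f z) ≤ s * (ℓ b - η) := mul_le_mul_of_nonneg_left h2 hs.1
      have h7 : (1-s) * (ℓ b - η) + s * (ℓ b - η) = ℓ b - η := by ring
      linarith
    obtain ⟨i, hi⟩ := this
    exact hUinvi i z (hηU _ (hnf z hzn i) hi)
  have K2 : ∀ z, f z = q → ℓ b - η < ℓ z := by
    intro z hz
    have hzn := (K1 z 1 (by simp) (by simp [hz])).2
    have h1 := hℓf z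
    rw [hz] at h1
    have hpp : p = (p - 1) + 1 := (Nat.sub_add_cancel hp.one_lt.le).symm
    rw [hpp, Finset.sum_range_succ', ← hpp] at h1
    have h2 : ∑ i ∈ Finset.range (p-1), ℓ (h^[i+1] z) ≤ (p-1) * ℓ b := by
      refine (Finset.sum_le_card_nsmul _ _ (ℓ b) fun i _ => hℓ1 _ (hnf z hzn (i+1))).trans ?_
      simp [Nat.cast_sub hp.one_lt.le]
    simp only [Function.iterate_zero, id_eq] at h1
    have h3 : p * (ℓ b - η / p) < p * ℓ q := mul_lt_mul_of_pos_left hqℓ hp0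
    have h4 : p * (ℓ b - η / p) = p * ℓ b - η := by field_simp
    linarith
  -- distances
  obtain ⟨d1, hd1, hd1b⟩ := compact_bound (isCompact_Icc.prod (hcUc.diff hUo))
    (fun x : ℝ × (Fin n → ℝ) => (1 - x.1) • x.2 + x.1 • f x.2) (by
      have h0 : ContinuousOn (fun x : ℝ × (Fin n → ℝ) => f x.2) (Icc (0:ℝ) 1 ×ˢ (closure U \ U)) :=
        hfc.comp continuousOn_snd (fun x hx => hcUV hx.2.1)
      have h1 : ContinuousOn (fun x : ℝ × (Fin n → ℝ) => (1 - x.1) • x.2) (Icc (0:ℝ) 1 ×ˢ (closure U \ U)) := by fun_prop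
      exact h1.add (continuousOn_fst.smul h0)) q (by
      rintro ⟨s, z⟩ ⟨hs, hz⟩ heq
      exact hz.2 (K1 z s hs heq).1 : ∀ x ∈ Icc (0:ℝ) 1 ×ˢ (closure U \ U), (1 - x.1) • x.2 + x.1 • f x.2 ≠ q)
  obtain ⟨d2, hd2, hd2b⟩ := compact_bound (hcUc.inter_right (isClosed_le ℓ.continuous continuous_const : IsClosed {z | ℓ z ≤ ℓ b - η}))
    f (hfc.mono (inter_subset_left.trans hcUV)) q (by
      rintro z ⟨_, hz⟩ heq
      have := K2 z heq
      simp only [mem_setOf_eq] at hz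
      linarith)
  obtain ⟨f', W, κ, hf'c, f'inv, hf'd, hW, hκ, hloc⟩ := perturb hp V hV h hm hc hper f hfc finv (closure U) hcUc hcUV q
    (fun z _ hz => (K1 z 1 (by simp) (by simp [hz])).2) (min d1 d2) (by positivity)
  have K3 : ∀ z ∈ closure U, ∀ s ∈ Icc (0:ℝ) 1, (1-s) • z + s • f' z = q → z ∈ U := by
    intro z hz s hs heq
    by_contra hzU
    have h1 : d1 < ‖(1-s) • z + s • f z - q‖ := hd1b (s, z) ⟨hs, hz, hzU⟩
    have h2 : (1-s) • z + s • f z - q = s • (f z - f' z) := by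
      rw [← heq, smul_sub]; abel
    rw [h2, norm_smul, norm_sub_rev, Real.norm_eq_abs, abs_of_nonneg hs.1] at h1
    have h3 := (hf'd z).trans (min_le_left _ _)
    have h4 : s * ‖f' z - f z‖ ≤ 1 * ‖f' z - f z‖ := mul_le_mul_of_nonneg_right hs.2 (norm_nonneg _)
    linarith
  have K4 : ∀ z ∈ closure U, f' z = q → z ∈ U ∧ ℓ b - η < ℓ z := by
    intro z hz heq
    refine ⟨K3 z hz 1 (by simp) (by simp [heq]), ?_⟩
    by_contra hcon
    have h1 := hd2b z ⟨hz, not_lt.mp hcon⟩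
    have h2 := (hf'd z).trans (min_le_right _ _)
    rw [heq, norm_sub_rev] at h2
    linarith
  classical
  let R : ℝ := ‖b‖ + r
  have hUR : ∀ z ∈ U, ‖z‖ ≤ R := by
    intro z hz
    have := hUb hz
    rw [Metric.mem_closedBall, dist_eq_norm] at this
    have h2 := norm_le_norm_add_norm_sub' z b
    simp only [R]
    linarith
  -- Homotopy A
  have hA := homotopy q (fun t x => lbl ((1-t) • x + t • f' x - q))
    (fun t x => if t < 1 then (if x ∈ U then 1 else 0) else (if x ∈ U ∧ x ∈ W then 1 else 0)) R
    (by
      intro t _ x hx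
      apply hUR
      by_contra hxU
      simp [hxU] at hx) (by
      intro t ht x
      by_cases hxc : x ∈ closure U
      · have hxV := hcUV hxc
        by_cases hq : (1-t) • x + t • f' x = q
        · left
          have hxU := K3 x hxc t ht hq
          have eU : ∀ᶠ p : ℝ × (Fin n → ℝ) in 𝓝 (t, x), p.2 ∈ U := continuousAt_snd.eventually (hUo.mem_nhds hxU)
          rcases lt_or_eq_of_le ht.2 with ht1 | ht1
          · have et : ∀ᶠ p : ℝ × (Fin n → ℝ) in 𝓝 (t, x), p.1 < 1 := continuousAt_fst.eventually (gt_mem_nhds ht1)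
            filter_upwards [eU, et] with p h1 h2 _
            simp [h1, h2, hxU, ht1]
          · subst ht1
            have hq' : f' x = q := by simpa using hq
            have hl := hloc x hxc hq'
            have hxW := hl.self_of_nhds.1
            have eW : ∀ᶠ p : ℝ × (Fin n → ℝ) in 𝓝 ((1:ℝ), x), p.2 ∈ W ∧ κ p.2 = κ x :=
              (continuousAt_snd (p := ((1:ℝ), x))).eventually hl
            filter_upwards [eU, eW] with p h1 h2 _
            simp [h1, h2, hxU, hxW]
        · right
          obtain ⟨l, hl⟩ := lbl_missing ((1-t) • x + t • f' x - q) (sub_ne_zero.mpr hq)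
          refine ⟨l, ?_⟩
          have hca : ContinuousAt (fun p : ℝ × (Fin n → ℝ) => (1-p.1) • p.2 + p.1 • f' p.2 - q) (t, x) := by
            have : ContinuousAt (fun p : ℝ × (Fin n → ℝ) => f' p.2) (t, x) :=
              ContinuousAt.comp (f := Prod.snd) (g := f') (hf'c.continuousAt (hV.mem_nhds hxV)) continuousAt_snd
            have h1 : ContinuousAt (fun p : ℝ × (Fin n → ℝ) => (1-p.1) • p.2) (t, x) := by fun_prop
            exact (h1.add (continuousAt_fst.smul this)).sub continuousAt_const
          filter_upwards [hca.eventually hl] with p hp _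
          exact hp
      · left
        have : ∀ᶠ p : ℝ × (Fin n → ℝ) in 𝓝 (t, x), p.2 ∈ (closure U)ᶜ :=
          continuousAt_snd.eventually (isClosed_closure.isOpen_compl.mem_nhds hxc)
        filter_upwards [this] with p hp _
        have h1 : p.2 ∉ U := fun hh => hp (subset_closure hh)
        have h2 : x ∉ U := fun hh => hxc (subset_closure hh)
        simp [h1, h2])
  -- Homotopy B
  have hB : ∀ i : ZMod p, ∀ᶠ ε in 𝓝[>] (0:ℝ),
      cntε q ε (fun x => lbl (f' x - q)) (fun x => if x ∈ U ∧ x ∈ W ∧ κ x + 1 = i then 1 else 0) =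
      cntε q ε (fun x => lbl (f' x - q)) (fun x => if x ∈ U ∧ x ∈ W ∧ κ x = i then 1 else 0) := by
    intro i
    have hB := homotopy q (fun t x => lbl (f' ((1-t) • x + t • h x) - q))
      (fun t x => if x ∈ U ∧ ((1-t) • x + t • h x) ∈ U ∧ ((1-t) • x + t • h x) ∈ W ∧ κ ((1-t) • x + t • h x) = i then 1 else 0) R
      (by
        intro t _ x hx
        apply hUR
        by_contra hxU
        simp [hxU] at hx) (by
        intro t ht x
        by_cases hxc : x ∈ closure U
        · have hxV := hcUV hxc
          have hca : ContinuousAt (fun p : ℝ × (Fin n → ℝ) => (1-p.1) • p.2 + p.1 • h p.2) (t, x) := by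
            have : ContinuousAt (fun p : ℝ × (Fin n → ℝ) => h p.2) (t, x) :=
              ContinuousAt.comp (f := Prod.snd) (g := h) (hc.continuousAt (hV.mem_nhds hxV)) continuousAt_snd
            have h1 : ContinuousAt (fun p : ℝ × (Fin n → ℝ) => (1-p.1) • p.2) (t, x) := by fun_prop
            exact h1.add (continuousAt_fst.smul this)
          set w := (1-t) • x + t • h x with hw
          by_cases hwc : w ∈ closure U
          · by_cases hq : f' w = q
            · left
              obtain ⟨hwU, hwℓ⟩ := K4 w hwc hq
              have hxU : x ∈ U := by
                by_cases hfx : h x = x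
                · have : w = x := by rw [hw, hfx, ← add_smul, sub_add_cancel, one_smul]
                  rwa [← this]
                · by_cases h1 : ℓ b - η < ℓ x
                  · exact hηU _ hfx h1
                  by_cases h2 : ℓ b - η < ℓ (h x)
                  · exact (hUinv x).mp (hηU _ (hnf x hfx 1) h2)
                  exfalso
                  have h4 : ℓ w = (1-t) * ℓ x + t * ℓ (h x) := by rw [hw]; simp
                  have h5 : (1-t) * ℓ x ≤ (1-t) * (ℓ b - η) := mul_le_mul_of_nonneg_left (not_lt.mp h1) (by linarith [ht.2])
                  have h6 : t * ℓ (h x) ≤ t * (ℓ b - η) := mul_le_mul_of_nonneg_left (not_lt.mp h2) ht.1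
                  have h7 : (1-t) * (ℓ b - η) + t * (ℓ b - η) = ℓ b - η := by ring
                  linarith
              have eU : ∀ᶠ p : ℝ × (Fin n → ℝ) in 𝓝 (t, x), p.2 ∈ U := continuousAt_snd.eventually (hUo.mem_nhds hxU)
              have ew := hca.eventually (hUo.mem_nhds hwU)
              have hl := hloc w hwc hq
              have hwW := hl.self_of_nhds.1
              have eW := hca.eventually hl
              filter_upwards [eU, ew, eW] with p h1 h2 h3 _
              have h2' : (1-p.1) • p.2 + p.1 • h p.2 ∈ U := h2
              simp only [h1, h2', h3.1, h3.2, hxU, ← hw, hwU, hwW]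
            · right
              obtain ⟨l, hl⟩ := lbl_missing (f' w - q) (sub_ne_zero.mpr hq)
              refine ⟨l, ?_⟩
              have hf'a : ContinuousAt f' w := hf'c.continuousAt (hV.mem_nhds (hcUV hwc))
              have h2 : ContinuousAt (fun p : ℝ × (Fin n → ℝ) => f' ((1-p.1) • p.2 + p.1 • h p.2) - q) (t, x) :=
                (ContinuousAt.comp (f := fun p : ℝ × (Fin n → ℝ) => (1-p.1) • p.2 + p.1 • h p.2) (g := f') hf'a hca).sub continuousAt_const
              filter_upwards [h2.eventually hl] with p hp _
              exact hp
          · left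
            have := hca.eventually (isClosed_closure.isOpen_compl.mem_nhds hwc)
            filter_upwards [this] with p hp _
            have h1 : (1-p.1) • p.2 + p.1 • h p.2 ∉ U := fun hh => hp (subset_closure hh)
            have h2 : w ∉ U := fun hh => hwc (subset_closure hh)
            simp [h1, ← hw, h2]
        · left
          have : ∀ᶠ p : ℝ × (Fin n → ℝ) in 𝓝 (t, x), p.2 ∈ (closure U)ᶜ :=
            continuousAt_snd.eventually (isClosed_closure.isOpen_compl.mem_nhds hxc)
          filter_upwards [this] with p hp _
          have h1 : p.2 ∉ U := fun hh => hp (subset_closure hh)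
          have h2 : x ∉ U := fun hh => hxc (subset_closure hh)
          simp [h1, h2])
    filter_upwards [hB] with ε hε
    simp only [sub_self, zero_smul, one_smul, zero_add, sub_zero, add_zero, f'inv] at hε
    convert hε using 2
    · ext x
      congr 1
      rw [hUinv, hW, eq_iff_iff]
      constructor
      · rintro ⟨h1, h2, h3⟩; exact ⟨h1, h1, h2, by rw [hκ x h2, h3]⟩
      · rintro ⟨h1, _, h2, h3⟩; exact ⟨h1, h2, by rw [← hκ x h2, h3]⟩
    · ext x
      congr 1
      simp only [eq_iff_iff]
      tauto
  haveI : NeZero p := ⟨hp.pos.ne'⟩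
  have hB' := Filter.eventually_all.mpr hB
  obtain ⟨ε, ⟨hεA, hεB⟩, hε⟩ := ((hA.and hB').and self_mem_nhdsWithin).exists
  have hε : 0 < ε := hε
  simp only [sub_self, zero_smul, one_smul, zero_add, sub_zero, add_zero, lt_irrefl, if_false, zero_lt_one, if_true] at hεA
  have hunit := cnt_id q ε hε (fun x => if x ∈ U then 1 else 0) (by simp [hqU])
  rw [← hεA, cnt_add q ε hε _ _ (fun (i : ZMod p) x => if x ∈ U ∧ x ∈ W ∧ κ x = i then 1 else 0) R (by
    intro i x hx
    apply hUR
    by_contra hxU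
    simp [hxU] at hx) (by
    intro x
    by_cases h1 : x ∈ U
    · by_cases h2 : x ∈ W
      · simp [h1, h2]
      · simp [h2]
    · simp [h1])] at hunit
  have hstep : ∀ i : ZMod p, cntε q ε (fun x => lbl (f' x - q)) (fun x => if x ∈ U ∧ x ∈ W ∧ κ x = i + 1 then 1 else 0) =
      cntε q ε (fun x => lbl (f' x - q)) (fun x => if x ∈ U ∧ x ∈ W ∧ κ x = i then 1 else 0) := by
    intro i
    rw [← hεB (i+1)]
    simp only [add_left_inj]
  have hconst : ∀ k : ℕ, cntε q ε (fun x => lbl (f' x - q)) (fun x => if x ∈ U ∧ x ∈ W ∧ κ x = (k : ZMod p) then 1 else 0) =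
      cntε q ε (fun x => lbl (f' x - q)) (fun x => if x ∈ U ∧ x ∈ W ∧ κ x = 0 then 1 else 0) := by
    intro k
    induction k with
    | zero => simp
    | succ k ih => rw [← ih, Nat.cast_succ]; exact hstep k
  have hsum : (∑ i : ZMod p, cntε q ε (fun x => lbl (f' x - q)) (fun x => if x ∈ U ∧ x ∈ W ∧ κ x = i then 1 else 0)) =
      ∑ i : ZMod p, cntε q ε (fun x => lbl (f' x - q)) (fun x => if x ∈ U ∧ x ∈ W ∧ κ x = 0 then 1 else 0) := by
    refine Finset.sum_congr rfl fun i _ => ?_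
    have := hconst i.val
    rw [ZMod.natCast_zmod_val] at this
    exact this
  rw [hsum, Finset.sum_const, Finset.card_univ, ZMod.card, nsmul_eq_mul] at hunit
  have := isUnit_of_mul_isUnit_left hunit
  rw [Int.isUnit_iff] at this
  have := hp.one_lt
  omega

end part5

section part6
open Equiv Set Filter Topology

lemma ne_near {X : Type*} [TopologicalSpace X] [T2Space X] {h : X → X} {b : X} (hc : ContinuousAt h b) (hb : h b ≠ b) :
    {z | h z ≠ z} ∈ 𝓝 b := by
  have h1 : ContinuousAt (fun z => (h z, z)) b := hc.prodMk continuousAt_id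
  have h2 : (diagonal X)ᶜ ∈ 𝓝 (h b, b) := isClosed_diagonal.isOpen_compl.mem_nhds hb
  exact h1.preimage_mem_nhds h2

theorem local_contra_E {n p : ℕ} (hp : p.Prime) (V : Set (EuclideanSpace ℝ (Fin n))) (hV : IsOpen V)
    (h : EuclideanSpace ℝ (Fin n) → EuclideanSpace ℝ (Fin n))
    (hm : MapsTo h V V) (hc : ContinuousOn h V) (hoff : ∀ z, z ∉ V → h z = z) (hper : ∀ z, h^[p] z = z)
    (b : EuclideanSpace ℝ (Fin n)) (hbV : b ∈ V) (hb : h b = b) (ℓ : EuclideanSpace ℝ (Fin n) →L[ℝ] ℝ)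
    (hℓ1 : ∀ z, h z ≠ z → ℓ z ≤ ℓ b)
    (hℓ2 : ∀ O ∈ 𝓝 b, ∃ η > 0, ∀ z, h z ≠ z → ℓ b - η < ℓ z → z ∈ O)
    (hcl : ∀ O ∈ 𝓝 b, ∃ z ∈ O, h z ≠ z) : False := by
  let e := EuclideanSpace.equiv (Fin n) ℝ
  have hne : ∀ z, e (h (e.symm z)) ≠ z ↔ h (e.symm z) ≠ e.symm z := fun z => by
    rw [not_iff_not, ContinuousLinearEquiv.eq_symm_apply]
  have hit : ∀ i z, (fun z => e (h (e.symm z)))^[i] z = e (h^[i] (e.symm z)) := by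
    intro i
    induction i with
    | zero => intro z; simp
    | succ i ih => intro z; rw [Function.iterate_succ_apply', ih, Function.iterate_succ_apply']; simp
  refine local_contra hp (e.symm ⁻¹' V) (hV.preimage e.symm.continuous) (fun z => e (h (e.symm z))) ?_ ?_ ?_ ?_ (e b)
    (by simpa using hbV) (by simp [hb]) (ℓ.comp (e.symm : (Fin n → ℝ) →L[ℝ] EuclideanSpace ℝ (Fin n))) ?_ ?_ ?_
  · intro z hz
    simpa using hm hz
  · exact e.continuous.comp_continuousOn (hc.comp e.symm.continuous.continuousOn (fun z hz => hz))
  · intro z hz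
    rw [hoff _ hz]; simp
  · intro z
    rw [hit, hper]; simp
  · intro z hz
    simpa using hℓ1 _ ((hne z).mp hz)
  · intro O hO
    obtain ⟨η, hη, hh⟩ := hℓ2 (e ⁻¹' O) (e.continuous.continuousAt.preimage_mem_nhds hO)
    refine ⟨η, hη, fun z hz hz2 => ?_⟩
    have := hh (e.symm z) ((hne z).mp hz) (by simpa using hz2)
    simpa using this
  · intro O hO
    obtain ⟨z, hz, hz2⟩ := hcl (e ⁻¹' O) (e.continuous.continuousAt.preimage_mem_nhds hO)
    exact ⟨e z, hz, (hne _).mpr (by simpa using hz2)⟩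

open EuclideanGeometry in
theorem euclid_newman {n p : ℕ} (hp : p.Prime) (V : Set (EuclideanSpace ℝ (Fin n))) (hV : IsOpen V)
    (h : EuclideanSpace ℝ (Fin n) → EuclideanSpace ℝ (Fin n))
    (hm : MapsTo h V V) (hc : ContinuousOn h V) (hoff : ∀ z, z ∉ V → h z = z) (hper : ∀ z, h^[p] z = z)
    (x : EuclideanSpace ℝ (Fin n)) (hxV : x ∈ V) (hx1 : x ∈ closure (interior {z | h z = z}))
    (hx2 : x ∈ closure {z | h z ≠ z}) : False := by
  have hinj : Function.Injective h := fun x y hxy => by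
    have h1 : ∀ z, h^[p-1] (h z) = z := fun z => by
      rw [← Function.iterate_succ_apply, Nat.succ_eq_add_one, Nat.sub_add_cancel hp.one_lt.le, hper]
    rw [← h1 x, hxy, h1]
  set A : Set (EuclideanSpace ℝ (Fin n)) := {z | h z ≠ z} with hA
  obtain ⟨r, hr, hrV⟩ := Metric.nhds_basis_ball.mem_iff.mp (hV.mem_nhds hxV)
  obtain ⟨a, ha, hax⟩ := Metric.mem_closure_iff.mp hx1 (r/4) (by positivity)
  obtain ⟨y, hy, hyx⟩ := Metric.mem_closure_iff.mp hx2 (r/4) (by positivity)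
  obtain ⟨b, hb, hab⟩ := (isClosed_closure (s := A)).exists_infDist_eq_dist ⟨y, subset_closure hy⟩ a
  have hmin : ∀ z ∈ A, dist a b ≤ dist a z := fun z hz => by
    rw [← hab]; exact Metric.infDist_le_dist_of_mem (subset_closure hz)
  have hbV : b ∈ V := by
    apply hrV
    rw [Metric.mem_ball]
    have h1 := hmin y hy
    have h2 := dist_triangle a x y
    have h3 := dist_triangle b a x
    rw [dist_comm b a] at h3
    rw [dist_comm x a] at hax
    linarith
  have haF : h a = a := by
    have := interior_subset ha
    exact this
  have hne : a ≠ b := by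
    rintro rfl
    obtain ⟨z, hz1, hz2⟩ := mem_closure_iff_nhds.mp hb _ (isOpen_interior.mem_nhds ha)
    exact hz2 (by have := interior_subset hz1; exact this)
  set R := dist a b with hR
  have hRpos : 0 < R := dist_pos.mpr hne
  have hbF : h b = b := by
    by_contra hcon
    have hAn : A ∈ 𝓝 b := ne_near (hc.continuousAt (hV.mem_nhds hbV)) hcon
    have hbc : b ∈ closure (Metric.ball a R) := by
      rw [closure_ball _ hRpos.ne', Metric.mem_closedBall, dist_comm]
    obtain ⟨z, hz1, hz2⟩ := mem_closure_iff_nhds.mp hbc _ hAn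
    have := hmin z hz1
    rw [Metric.mem_ball, dist_comm] at hz2
    linarith
  have hR0 := hRpos.ne'
  let ι := inversion a R
  have hii : ∀ z, ι (ι z) = z := fun z => inversion_inversion a hR0 z
  have hιa : ι a = a := inversion_self a R
  have hιb : ι b = b := inversion_of_mem_sphere (by rw [Metric.mem_sphere, dist_comm])
  have hιc : ∀ z, z ≠ a → ContinuousAt ι z := fun z hz => continuousAt_const.inversion continuousAt_const continuousAt_id hz
  have hιne : ∀ z, z ≠ a → ι z ≠ a := fun z hz hcon => hz (by rw [← hii z, hcon, hιa])
  have hιon : ContinuousOn ι {a}ᶜ := fun z hz => (hιc z hz).continuousWithinAt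
  have hfix : ∀ z, ι (h (ι z)) ≠ z ↔ h (ι z) ≠ ι z := fun z => by
    rw [not_iff_not]
    exact ⟨fun hh => by rw [← hii (h (ι z)), hh], fun hh => by rw [hh, hii]⟩
  have hit : ∀ i z, (fun z => ι (h (ι z)))^[i] z = ι (h^[i] (ι z)) := by
    intro i
    induction i with
    | zero => intro z; simp [hii]
    | succ i ih => intro z; rw [Function.iterate_succ_apply', ih, Function.iterate_succ_apply']; simp only [hii]
  have hnear : ∀ z, ι (h (ι z)) ≠ z → dist z b ^ 2 ≤ 2 * (inner ℝ (b - a) b - inner ℝ (b - a) z) := by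
    intro z hz
    have h1 := hmin (ι z) ((hfix z).mp hz)
    have hza : z ≠ a := by
      rintro rfl
      rw [hιa] at hz
      apply hz
      rw [haF, hιa]
    have hd : 0 < dist z a := dist_pos.mpr hza
    have h2 : dist (ι z) a = R ^ 2 / dist z a := dist_inversion_center a z R
    rw [dist_comm, h2, le_div_iff₀ hd] at h1
    have h3 : dist z a ≤ R := by nlinarith
    have h4 : ‖z - a‖ ^ 2 ≤ R ^ 2 := by rw [← dist_eq_norm]; gcongr
    have h5 : z - a = (z - b) + (b - a) := by abel
    have h6 : R = ‖b - a‖ := by rw [hR, dist_comm, dist_eq_norm]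
    rw [h5, norm_add_sq_real, h6] at h4
    rw [dist_eq_norm]
    have h7 : inner ℝ (b - a) b - inner ℝ (b - a) z = - inner ℝ (z - b) (b - a) := by
      rw [← inner_sub_right, real_inner_comm, ← inner_neg_left, neg_sub]
    rw [h7]; linarith
  refine local_contra_E hp ({a}ᶜ ∩ ι ⁻¹' V) (hιon.isOpen_inter_preimage isOpen_compl_singleton hV)
    (fun z => ι (h (ι z))) ?_ ?_ ?_ ?_ b ⟨fun hh => hne hh.symm, by simpa [hιb] using hbV⟩ (by simp only [hιb, hbF])
    (innerSL ℝ (b - a)) ?_ ?_ ?_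
  · rintro z ⟨hza, hzV⟩
    refine ⟨hιne _ fun hcon => ?_, ?_⟩
    · rw [← haF] at hcon
      exact hιne _ hza (hinj hcon)
    · simp only [mem_preimage, hii]
      exact hm hzV
  · rintro z ⟨hza, hzV⟩
    apply ContinuousAt.continuousWithinAt
    have h1 : ContinuousAt (fun z => h (ι z)) z :=
      ContinuousAt.comp (f := ι) (g := h) (hc.continuousAt (hV.mem_nhds hzV)) (hιc z hza)
    refine ContinuousAt.comp (f := fun z => h (ι z)) (g := ι) (hιc _ fun hcon => ?_) h1
    rw [← haF] at hcon
    exact hιne _ hza (hinj hcon)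
  · intro z hz
    by_cases hza : z = a
    · subst hza; simp only [hιa, haF]
    · have : ι z ∉ V := fun hh => hz ⟨hza, hh⟩
      rw [hoff _ this, hii]
  · intro z
    rw [hit, hper, hii]
  · intro z hz
    have := hnear z hz
    simp only [innerSL_apply_apply]
    nlinarith [sq_nonneg (dist z b)]
  · intro O hO
    obtain ⟨δ, hδ, hδO⟩ := Metric.nhds_basis_ball.mem_iff.mp hO
    refine ⟨δ^2/2, by positivity, fun z hz hz2 => hδO ?_⟩
    have := hnear z hz
    simp only [innerSL_apply_apply] at hz2
    rw [Metric.mem_ball]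
    exact lt_of_pow_lt_pow_left₀ 2 hδ.le (by linarith)
  · intro O hO
    have h1 : ι ⁻¹' O ∈ 𝓝 b := (hιc b hne.symm).preimage_mem_nhds (by rwa [hιb])
    obtain ⟨w, hw1, hw2⟩ := mem_closure_iff_nhds.mp hb _ h1
    refine ⟨ι w, hw1, (hfix _).mpr ?_⟩
    rw [hii]
    exact hw2

theorem newman_prime {n p : ℕ} (hp : p.Prime) {M : Type*} [TopologicalSpace M] [T2Space M]
    [ChartedSpace (EuclideanSpace ℝ (Fin n)) M] (N : Set M) (hN : IsOpen N) (h : M → M) (hm : MapsTo h N N)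
    (hc : ContinuousOn h N) (hper : ∀ y ∈ N, h^[p] y = y) (x : M) (hx : x ∈ N)
    (hcl : x ∈ closure (interior {y | h y = y})) : x ∈ interior {y | h y = y} := by
  by_contra hcon
  have hx2 : x ∈ closure {y | h y ≠ y} := by
    rw [mem_closure_iff_frequently]
    intro hh
    apply hcon
    rw [mem_interior_iff_mem_nhds]
    filter_upwards [hh] with y hy
    exact not_not.mp hy
  have hxF : h x = x := by
    by_contra hne
    have hAn : {y | h y ≠ y} ∈ 𝓝 x := ne_near (hc.continuousAt (hN.mem_nhds hx)) hne
    obtain ⟨z, hz1, hz2⟩ := mem_closure_iff_nhds.mp hcl _ hAn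
    exact hz1 (by have := interior_subset hz2; exact this)
  let φ := chartAt (EuclideanSpace ℝ (Fin n)) x
  let N' : Set M := {y | y ∈ N ∧ ∀ i, h^[i] y ∈ φ.source}
  have hN'o : IsOpen N' := by
    rw [isOpen_iff_mem_nhds]
    rintro z ⟨hzV, hz⟩
    have : ∀ᶠ y in 𝓝 z, ∀ i ∈ Finset.range p, h^[i] y ∈ φ.source := by
      rw [Filter.eventually_all_finset]
      intro i _
      exact ((iter_cont hm hc i).continuousAt (hN.mem_nhds hzV)).preimage_mem_nhds (φ.open_source.mem_nhds (hz i))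
    filter_upwards [this, hN.mem_nhds hzV] with y hy hyV
    refine ⟨hyV, fun i => ?_⟩
    have h2 : Function.IsPeriodicPt h p y := hper y hyV
    rw [← h2.iterate_mod_apply]
    exact hy _ (Finset.mem_range.mpr (Nat.mod_lt _ hp.pos))
  have hN'm : MapsTo h N' N' := fun z hz => ⟨hm hz.1, fun i => by
    rw [← Function.iterate_succ_apply]; exact hz.2 _⟩
  have hN's : N' ⊆ φ.source := fun z hz => hz.2 0
  have hxN' : x ∈ N' := ⟨hx, fun i => by
    rw [Function.iterate_fixed hxF]; exact mem_chart_source _ x⟩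
  let V : Set (EuclideanSpace ℝ (Fin n)) := φ.target ∩ φ.symm ⁻¹' N'
  have hVo : IsOpen V := φ.isOpen_inter_preimage_symm hN'o
  have hφV : ∀ y ∈ N', φ y ∈ V := fun y hy => ⟨φ.map_source (hN's hy), by
    simp only [mem_preimage, φ.left_inv (hN's hy)]; exact hy⟩
  classical
  let k : EuclideanSpace ℝ (Fin n) → EuclideanSpace ℝ (Fin n) := fun z => if z ∈ V then φ (h (φ.symm z)) else z
  have hkV : ∀ z ∈ V, k z = φ (h (φ.symm z)) := fun z hz => if_pos hz
  have hkm : MapsTo k V V := fun z hz => by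
    rw [hkV z hz]; exact hφV _ (hN'm hz.2)
  have hks : ∀ y ∈ N', k (φ y) = φ (h y) := fun y hy => by
    rw [hkV _ (hφV y hy), φ.left_inv (hN's hy)]
  have hkf : ∀ y ∈ N', (k (φ y) = φ y ↔ h y = y) := fun y hy => by
    rw [hks y hy]
    exact ⟨fun hh => φ.injOn (hN's (hN'm hy)) (hN's hy) hh, fun hh => by rw [hh]⟩
  have hit : ∀ i, ∀ y ∈ N', k^[i] (φ y) = φ (h^[i] y) := by
    intro i
    induction i with
    | zero => intro y _; rfl
    | succ i ih => intro y hy; rw [Function.iterate_succ_apply, hks y hy, ih _ (hN'm hy), Function.iterate_succ_apply]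
  refine euclid_newman hp V hVo k hkm ?_ (fun z hz => if_neg hz) ?_ (φ x) (hφV x hxN') ?_ ?_
  · have : ContinuousOn (fun z => φ (h (φ.symm z))) V := by
      refine φ.continuousOn.comp (hc.comp (φ.symm.continuousOn.mono inter_subset_left) fun z hz => hz.2.1) fun z hz => ?_
      exact hN's (hN'm hz.2)
    exact this.congr hkV
  · intro z
    by_cases hz : z ∈ V
    · have h1 := hit p _ hz.2
      rw [φ.right_inv hz.1, hper _ hz.2.1, φ.right_inv hz.1] at h1
      exact h1
    · have hkz : k z = z := if_neg hz
      exact Function.iterate_fixed hkz p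
  · rw [mem_closure_iff_nhds]
    intro O hO
    have h1 : φ ⁻¹' O ∈ 𝓝 x := (φ.continuousAt (hN's hxN')).preimage_mem_nhds hO
    obtain ⟨y, ⟨hy1, hy2⟩, hy3⟩ := mem_closure_iff_nhds.mp hcl _ (inter_mem h1 (hN'o.mem_nhds hxN'))
    refine ⟨φ y, hy1, ?_⟩
    rw [mem_interior_iff_mem_nhds]
    have h2 : φ '' (N' ∩ interior {y | h y = y}) ∈ 𝓝 (φ y) :=
      φ.image_mem_nhds (hN's hy2) (inter_mem (hN'o.mem_nhds hy2) (isOpen_interior.mem_nhds hy3))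
    filter_upwards [h2]
    rintro _ ⟨w, ⟨hw1, hw2⟩, rfl⟩
    exact (hkf w hw1).mpr (by have := interior_subset hw2; exact this)
  · rw [mem_closure_iff_nhds]
    intro O hO
    have h1 : φ ⁻¹' O ∈ 𝓝 x := (φ.continuousAt (hN's hxN')).preimage_mem_nhds hO
    obtain ⟨y, ⟨hy1, hy2⟩, hy3⟩ := mem_closure_iff_nhds.mp hx2 _ (inter_mem h1 (hN'o.mem_nhds hxN'))
    exact ⟨φ y, hy1, fun hh => hy3 ((hkf y hy2).mp hh)⟩

theorem newman {n m : ℕ} (hm0 : 0 < m) {M : Type*} [TopologicalSpace M] [T2Space M]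
    [ChartedSpace (EuclideanSpace ℝ (Fin n)) M] (N : Set M) (hN : IsOpen N) (h : M → M) (hm : MapsTo h N N)
    (hc : ContinuousOn h N) (hper : ∀ y ∈ N, h^[m] y = y) (x : M) (hx : x ∈ N)
    (hcl : x ∈ closure (interior {y | h y = y})) : x ∈ interior {y | h y = y} := by
  induction m using Nat.strong_induction_on generalizing N with
  | _ m ih =>
    rcases Nat.lt_or_ge 1 m with h1 | h1
    · obtain ⟨p, hp, k, rfl⟩ := Nat.exists_prime_and_dvd h1.ne'
      have hk : 0 < k := Nat.pos_of_ne_zero (by rintro rfl; simp at hm0)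
      have hkp : k < p * k := by nlinarith [hp.one_lt]
      have hsub : interior {y | h y = y} ⊆ interior {y | h^[k] y = y} :=
        interior_mono fun y hy => Function.iterate_fixed hy k
      have hxk := newman_prime (n := n) hp N hN h^[k] (hm.iterate k) (iter_cont hm hc k) (fun y hy => by
        rw [← Function.iterate_mul, mul_comm]; exact hper y hy) x hx (closure_mono hsub hcl)
      have hleft : ∀ y ∈ N, h^[p*k-1] (h y) = y := fun y hy => by
        rw [← Function.iterate_succ_apply, Nat.succ_eq_add_one, Nat.sub_add_cancel h1.le, hper y hy]
      have hright : ∀ y ∈ N, h (h^[p*k-1] y) = y := fun y hy => by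
        rw [← Function.iterate_succ_apply' h, Nat.succ_eq_add_one, Nat.sub_add_cancel h1.le, hper y hy]
      refine ih k hkp hk (N ∩ interior {y | h^[k] y = y}) (hN.inter isOpen_interior) ?_ (hc.mono inter_subset_left) ?_ ⟨hx, hxk⟩
      · rintro y ⟨hyN, hyF⟩
        refine ⟨hm hyN, ?_⟩
        rw [mem_interior_iff_mem_nhds]
        have hca : ContinuousAt h^[p*k-1] (h y) := (iter_cont hm hc _).continuousAt (hN.mem_nhds (hm hyN))
        have h2 := hca.preimage_mem_nhds (isOpen_interior.mem_nhds (show h^[p*k-1] (h y) ∈ interior {y | h^[k] y = y} by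
          rw [hleft y hyN]; exact hyF))
        filter_upwards [h2, hN.mem_nhds (hm hyN)] with w hw hwN
        have h3 : h^[k] (h^[p*k-1] w) = h^[p*k-1] w := by have := interior_subset hw; exact this
        have h4 : h^[k] (h (h^[p*k-1] w)) = h (h^[k] (h^[p*k-1] w)) := by
          rw [← Function.iterate_succ_apply, Function.iterate_succ_apply']
        rw [h3, hright w hwN] at h4
        exact h4
      · rintro y ⟨_, hy⟩
        have := interior_subset hy
        exact this
    · have : m = 1 := by omega
      subst this
      exact mem_interior_iff_mem_nhds.mpr (by filter_upwards [hN.mem_nhds hx] with y hy using hper y hy)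

end part6

section part7
open Equiv Set Filter Topology

section grp
variable {G M : Type*} [Group G] [TopologicalSpace M] [MulAction G M]

/-- interior of the fixed set of a group element -/
def IFix (M : Type*) [TopologicalSpace M] [MulAction G M] (g : G) : Set M := interior {y | g • y = y}

lemma ifix_fix {g : G} {y : M} (h : y ∈ IFix M g) : g • y = y := by
  have := interior_subset h
  exact this

lemma ifix_open (g : G) : IsOpen (IFix M g) := isOpen_interior

lemma fix_pow {g : G} {y : M} (h : g • y = y) (k : ℕ) : g ^ k • y = y := by
  induction k with
  | zero => simp
  | succ k ih => rw [pow_succ, mul_smul, h, ih]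

lemma ifix_pow {g : G} {y : M} (h : y ∈ IFix M g) (k : ℕ) : y ∈ IFix M (g ^ k) :=
  interior_mono (fun z hz => fix_pow hz k) h

lemma iter_smul (g : G) (k : ℕ) (y : M) : (fun z : M => g • z)^[k] y = g ^ k • y := by
  induction k with
  | zero => simp
  | succ k ih => rw [Function.iterate_succ_apply', ih, pow_succ', mul_smul]

variable [ContinuousConstSMul G M]

lemma ifix_smul {g a : G} (hc : Commute a g) {y : M} (h : y ∈ IFix M g) : a • y ∈ IFix M g := by
  unfold IFix
  rw [mem_interior_iff_mem_nhds]
  have hca : ContinuousAt (fun z : M => a⁻¹ • z) (a • y) := (continuous_const_smul _).continuousAt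
  have h2 := hca.preimage_mem_nhds (t := IFix M g) ((ifix_open g).mem_nhds (by simpa using h))
  filter_upwards [h2] with w hw
  have h3 := ifix_fix hw
  have h4 : g * a⁻¹ = a⁻¹ * g := (hc.inv_left.eq).symm
  rw [← mul_smul, h4, mul_smul] at h3
  exact smul_left_cancel _ h3

lemma newman_grp (n : ℕ) [T2Space M] [ChartedSpace (EuclideanSpace ℝ (Fin n)) M] (h : G) (k : ℕ) (hk : 0 < k)
    (x : M) (hx : x ∈ IFix M (h ^ k)) (hcl : x ∈ closure (IFix M h)) : x ∈ IFix M h :=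
  newman (n := n) hk (IFix M (h ^ k)) (ifix_open _) (fun z => h • z)
    (fun y hy => ifix_smul (Commute.self_pow h k) hy) (continuous_const_smul h).continuousOn
    (fun y hy => by rw [iter_smul]; exact ifix_fix hy) x hx hcl

/-- the set of locally periodic points -/
def Om (M : Type*) [TopologicalSpace M] [MulAction G M] (h : G) : Set M := {x | ∃ k, 0 < k ∧ x ∈ IFix M (h ^ k)}

lemma om_open (h : G) : IsOpen (Om M h) := by
  have : Om M h = ⋃ k, ⋃ (_ : 0 < k), IFix M (h ^ k) := by
    ext x; simp [Om]
  rw [this]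
  exact isOpen_iUnion fun k => isOpen_iUnion fun _ => ifix_open _

lemma om_smul (h a : G) (hc : Commute a h) {y : M} (hy : y ∈ Om M h) : a • y ∈ Om M h := by
  obtain ⟨k, hk, hy⟩ := hy
  exact ⟨k, hk, ifix_smul (hc.pow_right k) hy⟩

lemma step3 (n : ℕ) [T2Space M] [ChartedSpace (EuclideanSpace ℝ (Fin n)) M] (h : G) (X : Set M) (hX : IsPreconnected X)
    (hXO : X ⊆ Om M h) (m : ℕ) (hne : (X ∩ IFix M (h ^ m)).Nonempty) : X ⊆ IFix M (h ^ m) := by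
  refine hX.subset_of_closure_inter_subset (ifix_open _) hne ?_
  rintro x ⟨hx1, hx2⟩
  obtain ⟨k, hk, hxk⟩ := hXO hx2
  refine newman_grp n (h ^ m) k hk x ?_ hx1
  rw [← pow_mul, mul_comm, pow_mul]
  exact ifix_pow hxk m

lemma orbit_closed [T2Space (Quotient (MulAction.orbitRel G M))] (x : M) : IsClosed (MulAction.orbit G x) := by
  have h1 : IsClosed ((Quotient.mk (MulAction.orbitRel G M)) ⁻¹' {Quotient.mk (MulAction.orbitRel G M) x}) :=
    isClosed_singleton.preimage continuous_quotient_mk'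
  convert h1 using 1
  ext y
  rw [mem_preimage, mem_singleton_iff, Quotient.eq]
  exact MulAction.orbitRel_apply.symm

lemma orbit_finite [Countable G] [CompactSpace M] [T2Space M] [T2Space (Quotient (MulAction.orbitRel G M))] (x : M) :
    (MulAction.orbit G x).Finite := by
  have hcl := orbit_closed (G := G) x
  have hcomp : IsCompact (MulAction.orbit G x) := hcl.isCompact
  have hcs : CompactSpace (MulAction.orbit G x) := isCompact_iff_compactSpace.mp hcomp
  have hcount : Countable (MulAction.orbit G x) := (countable_range (fun g : G => g • x)).to_subtype
  have hne : Nonempty (MulAction.orbit G x) := ⟨⟨x, MulAction.mem_orbit_self x⟩⟩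
  obtain ⟨y, hy⟩ := nonempty_interior_of_iUnion_of_closed (f := fun y : MulAction.orbit G x => ({y} : Set (MulAction.orbit G x)))
    (fun _ => isClosed_singleton) (by ext z; simp)
  obtain ⟨z, hz⟩ := hy
  have hzy : z = y := by
    have := interior_subset hz
    exact this
  subst hzy
  have hopen : IsOpen ({z} : Set (MulAction.orbit G x)) := by
    rw [isOpen_iff_mem_nhds]
    rintro w hw
    rw [mem_singleton_iff] at hw
    subst hw
    exact mem_interior_iff_mem_nhds.mp hz
  have hdisc : DiscreteTopology (MulAction.orbit G x) := by
    rw [discreteTopology_iff_isOpen_singleton]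
    intro w
    obtain ⟨g, hg⟩ : ∃ g : G, g • w.1 = z.1 := by
      obtain ⟨a, ha⟩ := w.2
      obtain ⟨b, hb⟩ := z.2
      refine ⟨b * a⁻¹, ?_⟩
      rw [← ha, ← hb]
      simp [mul_smul]
    have hcont : Continuous (fun v : MulAction.orbit G x => g • v) := by
      rw [continuous_induced_rng]
      exact (continuous_const_smul g).comp continuous_subtype_val
    convert hopen.preimage hcont using 1
    ext v
    simp only [mem_singleton_iff, mem_preimage]
    constructor
    · rintro rfl
      exact Subtype.ext hg
    · intro hv
      apply Subtype.ext
      have : g • v.1 = z.1 := congrArg Subtype.val hv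
      rw [← hg] at this
      exact smul_left_cancel g this
  exact hcomp.finite (isDiscrete_iff_discreteTopology.mpr hdisc)

lemma small_nbhd [CompactSpace M] [T2Space M] [LocallyConnectedSpace M]
    [T2Space (Quotient (MulAction.orbitRel G M))] (x : M) (hfin : (MulAction.orbit G x).Finite) (O : Set M) (hO : IsOpen O) (hxO : x ∈ O) :
    ∃ N : Set M, IsOpen N ∧ x ∈ N ∧ N ⊆ O ∧ IsPreconnected N ∧ ∀ g : G, g • x = x → ∀ y ∈ N, g • y ∈ N := by
  obtain ⟨U, hU, hdis⟩ := hfin.t2_separation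
  let Vx := U x ∩ O
  have hVxo : IsOpen Vx := (hU x).2.inter hO
  let Y : Set M := ⋃ y ∈ MulAction.orbit G x \ {x}, U y
  have hYo : IsOpen Y := isOpen_biUnion fun y _ => (hU y).2
  have hVY : Disjoint Vx Y := by
    rw [Set.disjoint_left]
    intro z hz1 hz2
    simp only [Y, mem_iUnion] at hz2
    obtain ⟨y, hy, hz2⟩ := hz2
    exact Set.disjoint_left.mp (hdis (MulAction.mem_orbit_self x) hy.1 (fun h => hy.2 h.symm)) hz1.1 hz2
  let π := Quotient.mk (MulAction.orbitRel G M)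
  have hπc : Continuous π := continuous_quotient_mk'
  have hclosed : IsClosed (π '' (Vx ∪ Y)ᶜ) := ((hVxo.union hYo).isClosed_compl.isCompact.image hπc).isClosed
  let O' : Set M := (π ⁻¹' (π '' (Vx ∪ Y)ᶜ))ᶜ
  have hO'o : IsOpen O' := (hclosed.preimage hπc).isOpen_compl
  have hπg : ∀ (g : G) (y : M), π (g • y) = π y := fun g y => Quotient.sound ⟨g, rfl⟩
  have hO'g : ∀ (g : G), ∀ y ∈ O', g • y ∈ O' := by
    intro g y hy hc
    apply hy
    simp only [mem_preimage, hπg] at hc ⊢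
    exact hc
  have hO's : O' ⊆ Vx ∪ Y := by
    intro y hy
    by_contra hc
    exact hy ⟨y, hc, rfl⟩
  have hxO' : x ∈ O' := by
    rintro ⟨y, hy, hyx⟩
    have hyo : y ∈ MulAction.orbit G x := MulAction.orbitRel_apply.mp (Quotient.exact hyx)
    apply hy
    by_cases hxy : y = x
    · left; rw [hxy]; exact ⟨(hU x).1, hxO⟩
    · right
      simp only [Y, mem_iUnion]
      exact ⟨y, ⟨hyo, hxy⟩, (hU y).1⟩
  have hxV : x ∈ Vx := ⟨(hU x).1, hxO⟩
  have hsub := connectedComponentIn_subset (O' ∩ Vx) x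
  refine ⟨connectedComponentIn (O' ∩ Vx) x, (hO'o.inter hVxo).connectedComponentIn, mem_connectedComponentIn ⟨hxO', hxV⟩,
    fun y hy => (hsub hy).2.2, isPreconnected_connectedComponentIn, ?_⟩
  intro g hg y hy
  set N := connectedComponentIn (O' ∩ Vx) x
  have hxN : x ∈ N := mem_connectedComponentIn ⟨hxO', hxV⟩
  have hpc : IsPreconnected ((fun z : M => g • z) '' N) :=
    isPreconnected_connectedComponentIn.image _ (continuous_const_smul g).continuousOn
  have hgO : (fun z : M => g • z) '' N ⊆ O' := by
    rintro _ ⟨z, hz, rfl⟩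
    exact hO'g g z (hsub hz).1
  have hxg : x ∈ (fun z : M => g • z) '' N := ⟨x, hxN, hg⟩
  have hgV : (fun z : M => g • z) '' N ⊆ Vx :=
    hpc.subset_left_of_subset_union hVxo hYo hVY (hgO.trans hO's) ⟨x, hxg, hxV⟩
  exact hpc.subset_connectedComponentIn hxg (subset_inter hgO hgV) ⟨y, hy, rfl⟩

lemma fin_orbit_pow (h : G) (x : M) (hfin : (MulAction.orbit G x).Finite) : ∃ k : ℕ, h ^ (k+1) • x = x := by
  have : ¬ Function.Injective (fun k : ℕ => h ^ k • x) := by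
    intro hinj
    exact (infinite_range_of_injective hinj) (hfin.subset (by rintro _ ⟨k, rfl⟩; exact ⟨h^k, rfl⟩))
  rw [Function.Injective] at this
  push Not at this
  obtain ⟨a, b, hab, hne⟩ := this
  have aux : ∀ a b : ℕ, h ^ a • x = h ^ b • x → a < b → ∃ k : ℕ, h ^ (k+1) • x = x := by
    intro a b hab hlt
    refine ⟨b - a - 1, ?_⟩
    have hb : b = a + (b - a - 1 + 1) := by omega
    rw [hb, pow_add, mul_smul] at hab
    exact (smul_left_cancel _ hab).symm
  rcases lt_or_gt_of_ne hne with h1 | h1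
  · exact aux a b hab h1
  · exact aux b a hab.symm h1

lemma fix_closed [T2Space M] (g : G) : IsClosed {y : M | g • y = y} := isClosed_eq (continuous_const_smul g) continuous_id

lemma om_dense [CompactSpace M] [T2Space M] (hfin : ∀ x : M, (MulAction.orbit G x).Finite) (h : G) : Dense (Om M h) := by
  have := dense_iUnion_interior_of_closed (f := fun k : ℕ => {y : M | h ^ (k+1) • y = y}) (fun k => fix_closed _) (by
    ext x
    simpa using fin_orbit_pow h x (hfin x))
  refine this.mono ?_
  intro x hx
  simp only [mem_iUnion] at hx
  obtain ⟨k, hk⟩ := hx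
  exact ⟨k+1, by omega, hk⟩

/-- the piecewise argument -/
lemma step4 (n : ℕ) [T2Space M] [ChartedSpace (EuclideanSpace ℝ (Fin n)) M] [LocallyConnectedSpace M]
    (h : G) (m : ℕ) (N : Set M) (hN : IsOpen N) (hNc : IsPreconnected N) (hNg : ∀ y ∈ N, h ^ m • y ∈ N)
    (hP : ∀ y ∈ N, y ∉ Om M h → h ^ m • y = y) (hinv : ∀ y ∈ N, (h ^ m)⁻¹ • y ∈ N) :
    ∃ j : ℕ, 0 < j ∧ ∀ y ∈ N, y ∈ Om M h → (h ^ m) ^ j • y = y := by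
  by_cases hall : ∀ y ∈ N, y ∈ Om M h → h ^ m • y = y
  · exact ⟨1, one_pos, by simpa using hall⟩
  push Not at hall
  obtain ⟨y, hyN, hyO, hyg⟩ := hall
  obtain ⟨j, hj, hyj⟩ := id hyO
  refine ⟨j, hj, ?_⟩
  set g := h ^ m with hg
  have hgc : Commute g h := (Commute.refl h).pow_left m
  set Q := N ∩ Om M h with hQ
  have hQo : IsOpen Q := hN.inter (om_open h)
  have hQg : ∀ z ∈ Q, g • z ∈ Q := fun z hz => ⟨hNg z hz.1, om_smul h g hgc hz.2⟩
  have hQi : ∀ z ∈ Q, g⁻¹ • z ∈ Q := fun z hz => ⟨hinv z hz.1, om_smul h g⁻¹ hgc.inv_left hz.2⟩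
  have hQgi : ∀ (i : ℕ), ∀ z ∈ Q, g ^ i • z ∈ Q := by
    intro i
    induction i with
    | zero => simp
    | succ i ih => intro z hz; rw [pow_succ', mul_smul]; exact hQg _ (ih z hz)
  have hQii : ∀ (i : ℕ), ∀ z ∈ Q, (g ^ i)⁻¹ • z ∈ Q := by
    intro i
    induction i with
    | zero => simp
    | succ i ih => intro z hz; rw [pow_succ, mul_inv_rev, mul_smul]; exact hQi _ (ih z hz)
  set C := connectedComponentIn Q y with hC
  have hCQ : C ⊆ Q := connectedComponentIn_subset Q y
  have hyC : y ∈ C := mem_connectedComponentIn ⟨hyN, hyO⟩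
  have hCo : IsOpen C := hQo.connectedComponentIn
  have hCc : IsPreconnected C := isPreconnected_connectedComponentIn
  have hCj : ∀ z ∈ C, g ^ j • z = z := by
    intro z hz
    have hsub := step3 n h C hCc (fun w hw => (hCQ hw).2) (m * j) ⟨y, hyC, by
      rw [mul_comm, pow_mul]; exact ifix_pow hyj m⟩
    rw [hg, ← pow_mul]
    exact ifix_fix (hsub hz)
  let D : Set M := {z | ∃ i : ℕ, (g ^ i)⁻¹ • z ∈ C}
  have hDo : IsOpen D := by
    have : D = ⋃ i : ℕ, (fun z : M => (g ^ i)⁻¹ • z) ⁻¹' C := by ext z; simp [D]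
    rw [this]
    exact isOpen_iUnion fun i => hCo.preimage (continuous_const_smul _)
  have hDj : ∀ z ∈ D, g ^ j • z = z := by
    rintro z ⟨i, hz⟩
    have h1 := hCj _ hz
    have h2 : g ^ j * (g ^ i)⁻¹ = (g ^ i)⁻¹ * g ^ j := ((Commute.refl g).pow_pow j i).inv_right.eq
    rw [← mul_smul, h2, mul_smul] at h1
    exact smul_left_cancel _ h1
  have hDg : ∀ z ∈ D, g • z ∈ D := by
    rintro z ⟨i, hz⟩
    refine ⟨i+1, ?_⟩
    rw [← mul_smul, pow_succ', mul_inv_rev, inv_mul_cancel_right]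
    exact hz
  have hCD : C ⊆ D := fun z hz => ⟨0, by simpa using hz⟩
  have hDQ : D ⊆ Q := by
    rintro z ⟨i, hz⟩
    have := hQgi i _ (hCQ hz)
    rwa [smul_inv_smul] at this
  have hDclosed : ∀ z ∈ Q, z ∉ D → ∀ w ∈ connectedComponentIn Q z, w ∉ D := by
    rintro z hz hzD w hw ⟨i, hwC⟩
    apply hzD
    refine ⟨i, ?_⟩
    have hpc : IsPreconnected ((fun v : M => (g ^ i)⁻¹ • v) '' connectedComponentIn Q z) :=
      isPreconnected_connectedComponentIn.image _ (continuous_const_smul _).continuousOn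
    have hs : (fun v : M => (g ^ i)⁻¹ • v) '' connectedComponentIn Q z ⊆ Q := by
      rintro _ ⟨v, hv, rfl⟩
      exact hQii i v (connectedComponentIn_subset _ _ hv)
    have := hpc.subset_connectedComponentIn (x := (g ^ i)⁻¹ • w) ⟨w, hw, rfl⟩ hs
    rw [connectedComponentIn_eq hwC |>.symm] at this
    exact this ⟨z, mem_connectedComponentIn hz, rfl⟩
  by_cases hQD : Q ⊆ D
  · intro z hz1 hz2
    exact hDj z (hQD ⟨hz1, hz2⟩)
  exfalso
  obtain ⟨z, hzQ, hzD⟩ := not_subset.mp hQD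
  classical
  let k : M → M := fun z => if z ∈ D then g • z else z
  have hkD : ∀ z ∈ D, k z = g • z := fun z hz => if_pos hz
  have hkn : ∀ z, z ∉ D → k z = z := fun z hz => if_neg hz
  have hkoff : ∀ z ∈ Q, z ∉ D → z ∈ interior {w | k w = w} := by
    intro z hz hzD
    rw [mem_interior]
    exact ⟨connectedComponentIn Q z, fun w hw => hkn w (hDclosed z hz hzD w hw), hQo.connectedComponentIn, mem_connectedComponentIn hz⟩
  have hkm : MapsTo k N N := by
    intro w hw
    by_cases hwD : w ∈ D
    · rw [hkD w hwD]; exact hNg w hw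
    · rw [hkn w hwD]; exact hw
  have hkc : ContinuousOn k N := by
    intro w hw
    apply ContinuousAt.continuousWithinAt
    by_cases hwD : w ∈ D
    · have h1 : (fun z : M => g • z) =ᶠ[𝓝 w] k := by
        filter_upwards [hDo.mem_nhds hwD] with v hv
        exact (hkD v hv).symm
      exact (continuous_const_smul g).continuousAt.congr h1
    · by_cases hwO : w ∈ Om M h
      · have h1 : (fun z : M => z) =ᶠ[𝓝 w] k := by
          filter_upwards [mem_interior_iff_mem_nhds.mp (hkoff w ⟨hw, hwO⟩ hwD)] with v hv
          exact hv.symm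
        exact continuousAt_id.congr h1
      · have hgw := hP w hw hwO
        have hgca : ContinuousAt (fun z : M => g • z) w := (continuous_const_smul g).continuousAt
        intro S hS
        rw [hkn w hwD] at hS
        have h1 : (fun z : M => g • z) ⁻¹' S ∈ 𝓝 w := hgca.preimage_mem_nhds (by rwa [hgw])
        rw [mem_map]
        filter_upwards [hS, h1] with v h2 h3
        rw [mem_preimage]
        by_cases hvD : v ∈ D
        · rw [hkD v hvD]; exact h3
        · rw [hkn v hvD]; exact h2
  have hkj : ∀ w, k^[j] w = w := by
    intro w
    by_cases hwD : w ∈ D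
    · have : ∀ i, k^[i] w = g ^ i • w ∧ k^[i] w ∈ D := by
        intro i
        induction i with
        | zero => simpa using hwD
        | succ i ih =>
          rw [Function.iterate_succ_apply', hkD _ ih.2]
          refine ⟨?_, hDg _ ih.2⟩
          rw [ih.1, pow_succ', mul_smul]
      rw [(this j).1, hDj w hwD]
    · exact Function.iterate_fixed (hkn w hwD) j
  have hfinal : N ⊆ interior {w | k w = w} := by
    refine hNc.subset_of_closure_inter_subset isOpen_interior ⟨z, hzQ.1, hkoff z hzQ hzD⟩ ?_
    rintro w ⟨hw1, hw2⟩
    exact newman (n := n) hj N hN k hkm hkc (fun v _ => hkj v) w hw2 hw1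
  have h1 : k y = y := by
    have := interior_subset (hfinal hyN)
    exact this
  rw [hkD y (hCD hyC)] at h1
  exact hyg h1

lemma om_univ (n : ℕ) [CompactSpace M] [T2Space M] [ChartedSpace (EuclideanSpace ℝ (Fin n)) M] [LocallyConnectedSpace M]
    [T2Space (Quotient (MulAction.orbitRel G M))]
    (hfin : ∀ x : M, (MulAction.orbit G x).Finite) (h : G) : Om M h = univ := by
  by_contra hcon
  obtain ⟨x0, hx0⟩ := (ne_univ_iff_exists_notMem _).mp hcon
  have hPc : IsCompact (Om M h)ᶜ := (om_open h).isClosed_compl.isCompact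
  have hcs : CompactSpace ↥(Om M h)ᶜ := isCompact_iff_compactSpace.mp hPc
  have hne : Nonempty ↥(Om M h)ᶜ := ⟨⟨x0, hx0⟩⟩
  obtain ⟨k, ⟨x, hx⟩⟩ := nonempty_interior_of_iUnion_of_closed (f := fun k : ℕ => {y : ↥(Om M h)ᶜ | h ^ (k+1) • y.1 = y.1})
    (fun k => (fix_closed (h ^ (k+1))).preimage continuous_subtype_val) (by
      ext x
      simpa using fin_orbit_pow h x.1 (hfin x.1))
  rw [mem_interior] at hx
  obtain ⟨S, hSs, hSo, hxS⟩ := hx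
  obtain ⟨O, hO, rfl⟩ := isOpen_induced_iff.mp hSo
  obtain ⟨N, hN, hxN, hNO, hNc, hNg⟩ := small_nbhd (G := G) x.1 (hfin x.1) O hO hxS
  have hgx : h ^ (k+1) • x.1 = x.1 := by
    have := hSs hxS
    exact this
  obtain ⟨j, hj, hjN⟩ := step4 n h (k+1) N hN hNc (hNg _ hgx) (by
    intro y hy hyO
    have := hSs (show (⟨y, hyO⟩ : ↥(Om M h)ᶜ) ∈ Subtype.val ⁻¹' O from hNO hy)
    exact this) (hNg _ (by rw [inv_smul_eq_iff]; exact hgx.symm))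
  apply x.2
  refine ⟨(k+1) * j, by positivity, ?_⟩
  unfold IFix
  rw [mem_interior]
  refine ⟨N, ?_, hN, hxN⟩
  have h1 : N ⊆ closure (N ∩ Om M h) := (om_dense hfin h).open_subset_closure_inter hN
  refine h1.trans (closure_minimal ?_ (fix_closed _))
  rintro y ⟨hy1, hy2⟩
  have := hjN y hy1 hy2
  rw [← pow_mul] at this
  exact this

lemma free_of_ifix (n : ℕ) [CompactSpace M] [ConnectedSpace M] [T2Space M] [ChartedSpace (EuclideanSpace ℝ (Fin n)) M]
    [LocallyConnectedSpace M] [FaithfulSMul G M] [T2Space (Quotient (MulAction.orbitRel G M))]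
    (hfin : ∀ x : M, (MulAction.orbit G x).Finite) (h : G) (hne : (IFix M h).Nonempty) : h = 1 := by
  have h1 := step3 n h (univ : Set M) isPreconnected_univ (om_univ n hfin h).ge 1 (by simpa using hne)
  apply eq_of_smul_eq_smul (α := M)
  intro x
  have := ifix_fix (h1 (mem_univ x))
  simpa using this

end grp

theorem main_thm {G M : Type*} (n : ℕ) [Group G] [Countable G]
    [TopologicalSpace M] [Nonempty M] [ConnectedSpace M] [CompactSpace M] [T2Space M]
    [ChartedSpace (EuclideanSpace ℝ (Fin n)) M]
    [MulAction G M] [FaithfulSMul G M] [ContinuousConstSMul G M]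
    [T2Space (Quotient (MulAction.orbitRel G M))] :
    Finite G := by
  have hlc : LocallyConnectedSpace M := ChartedSpace.locallyConnectedSpace (EuclideanSpace ℝ (Fin n)) M
  have hfin : ∀ x : M, (MulAction.orbit G x).Finite := orbit_finite
  have hd : Dense (⋂ h : {h : G // h ≠ 1}, {y : M | h.1 • y = y}ᶜ) := by
    apply dense_iInter_of_isOpen
    · intro h; exact (fix_closed h.1).isOpen_compl
    · intro h
      rw [← interior_eq_empty_iff_dense_compl]
      by_contra hne
      exact h.2 (free_of_ifix n hfin h.1 (nonempty_iff_ne_empty.mpr hne))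
  obtain ⟨x, hx⟩ := hd.nonempty
  have hfree : ∀ h : G, h • x = x → h = 1 := by
    intro h hh
    by_contra hne
    exact mem_iInter.mp hx ⟨h, hne⟩ hh
  have hinj : Function.Injective (fun g : G => (⟨g • x, g, rfl⟩ : MulAction.orbit G x)) := by
    intro a b hab
    have h1 : a • x = b • x := congrArg Subtype.val hab
    have h2 : b⁻¹ * a = 1 := hfree _ (by rw [mul_smul, h1, inv_smul_smul])
    exact (inv_mul_eq_one.mp h2).symm
  have := (hfin x).to_subtype
  exact Finite.of_injective _ hinj

end part7


/-- A countable group acting effectively on a nonempty connected compact topological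
`n`-manifold with Hausdorff orbit space is finite. -/
theorem stmt13 {G M : Type*} (n : ℕ) [Group G] [Countable G]
    [TopologicalSpace M] [Nonempty M] [ConnectedSpace M] [CompactSpace M] [T2Space M]
    [ChartedSpace (EuclideanSpace ℝ (Fin n)) M]
    [MulAction G M] [FaithfulSMul G M] [ContinuousConstSMul G M]
    [T2Space (Quotient (MulAction.orbitRel G M))] :
    Finite G := by
  exact main_thm (M := M) n
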